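/- arXiv:1310.5829 — 2 statements merged into one kernel-verified Lean document; each statement's English description precedes it below -/
import Mathlib

section
/- For each f ∈ C(E) and each initial state Z₀ ∈ E∖E₀, the weighted average (1/n) Σ_{i=0}^{n−1} f(Z_i)τ_i converges in probability to π₀(f/r) as n → ∞; moreover, the convergence is uniform with respect to Z₀ in any compact subset of E∖E₀. -/
open MeasureTheory ProbabilityTheory Filter Topology Set ENNReal

noncomputable section

/-- The data of transition rates `c(x,dy) = r(x) p(x,y) λ(dy)` on a state space `E`,
satisfying Assumption 1.1 (i)-(iii): `r` is continuous and nonnegative, `λ` is a probability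
measure which is strictly positive on open sets, `p` is a strictly positive continuous
transition density, and `1/r` is `λ`-integrable. -/
structure ChainSetting (E : Type*) [MeasurableSpace E] [TopologicalSpace E] where
  r : E → ℝ
  r_cont : Continuous r
  r_nonneg : ∀ x, 0 ≤ r x
  lam : Measure E
  lam_prob : IsProbabilityMeasure lam
  lam_pos : ∀ U : Set E, IsOpen U → U.Nonempty → 0 < lam U
  p : E → E → ℝ
  p_cont : Continuous fun z : E × E => p z.1 z.2
  p_pos : ∀ x y, 0 < p x y
  p_int : ∀ x, ∫ y, p x y ∂lam = 1
  inv_r_int : ∫⁻ x, (ENNReal.ofReal (r x))⁻¹ ∂lam ≠ ∞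

namespace ChainSetting

variable {E : Type*} [MeasurableSpace E] [TopologicalSpace E] (S : ChainSetting E)

/-- The (closed) set `E₀ = {x : r(x) = 0}` of absorbing states. -/
def E0 : Set E := {x | S.r x = 0}

/-- The skeleton transition probability `p(x,dy) = p(x,y) λ(dy)`. -/
def skel (x : E) : Measure E := S.lam.withDensity fun y => ENNReal.ofReal (S.p x y)

/-- The jump rates `c(x,dy) = r(x) p(x,y) λ(dy)`. -/
def cMeas (x : E) : Measure E := S.lam.withDensity fun y => ENNReal.ofReal (S.r x * S.p x y)

/-- The measure `μ(dx) c(x,dy)` on `E × E`. -/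
def muc (μ : Measure E) : Measure (E × E) :=
  (μ.prod S.lam).withDensity fun z => ENNReal.ofReal (S.r z.1 * S.p z.1 z.2)

/-- The invariant probability `π(dx) = π₀(1/r)⁻¹ π₀(dx)/r(x)` of the continuous-time chain,
built from the invariant probability `π₀` of the skeleton, cf. (1.2). -/
def piMeas (π₀ : Measure E) : Measure E :=
  (∫⁻ x, (ENNReal.ofReal (S.r x))⁻¹ ∂π₀)⁻¹ •
    π₀.withDensity fun x => (ENNReal.ofReal (S.r x))⁻¹

/-- Assumption 1.1 (iv): with `A_δ = {r < δ}`, there is a sequence `δ_n → 0` with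
`λ(A_{2δ_n}) ≤ C λ(A_{2δ_n} \ A_{δ_n})`. -/
def CondIV : Prop :=
  ∃ δ : ℕ → ℝ, (∀ n, 0 < δ n) ∧ Tendsto δ atTop (𝓝 0) ∧
    ∃ C : ℝ≥0∞, C ≠ ∞ ∧ ∀ n,
      S.lam {x | S.r x < 2 * δ n} ≤ C * S.lam ({x | S.r x < 2 * δ n} \ {x | S.r x < δ n})

end ChainSetting

/-- Trajectories of the jump process: the skeleton chain `ω.1` together with the holding
times `ω.2` (with value `∞` allowed, corresponding to absorption). -/
abbrev Traj (E : Type*) := (ℕ → E) × (ℕ → ℝ≥0∞)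

namespace Traj

variable {E : Type*}

/-- The jump times `T_n = τ_0 + ⋯ + τ_{n-1}`. -/
def jumpTime (n : ℕ) (ω : Traj E) : ℝ≥0∞ := ∑ i ∈ Finset.range n, ω.2 i

/-- The position at time `t`: `X_t = Z_n` for `T_n ≤ t < T_{n+1}`. -/
def pos (t : ℝ) (ω : Traj E) : E := ω.1 (sInf {n | ENNReal.ofReal t < jumpTime (n + 1) ω})

end Traj

/-- The exponential law of parameter `ρ`, as a measure on `ℝ≥0∞`; for `ρ ≤ 0` it is the Dirac
mass at `∞` (infinite holding time at an absorbing state). -/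
def expMeasE (ρ : ℝ) : Measure ℝ≥0∞ :=
  if 0 < ρ then
    Measure.map ENNReal.ofReal
      (MeasureTheory.volume.withDensity fun s =>
        Set.indicator (Set.Ioi (0 : ℝ)) (fun s => ENNReal.ofReal (ρ * Real.exp (-(ρ * s)))) s)
  else Measure.dirac ∞

/-- `P` is the law of the continuous-time Markov chain with holding rates `ρ` and skeleton
transition kernel `κ`, started at `x`: the skeleton `ω.1` is a Markov chain with kernel `κ`
started at `x`, and conditionally on the skeleton the holding times `ω.2 i` are independent
exponential random variables of parameters `ρ(Z_i)`. -/
structure IsChainLaw {E : Type*} [MeasurableSpace E]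
    (ρ : E → ℝ) (κ : E → Measure E) (x : E) (P : Measure (Traj E)) : Prop where
  prob : IsProbabilityMeasure P
  init : P.map (fun ω => ω.1 0) = Measure.dirac x
  markov : ∀ (n : ℕ) (f : (Fin (n + 1) → E) → ℝ≥0∞) (g : E → ℝ≥0∞),
    Measurable f → Measurable g →
    ∫⁻ ω, f (fun i => ω.1 i) * g (ω.1 (n + 1)) ∂P
      = ∫⁻ ω, f (fun i => ω.1 i) * ∫⁻ y, g y ∂κ (ω.1 n) ∂P
  holding : ∀ (n : ℕ) (f : (ℕ → E) → ℝ≥0∞) (g : Fin n → ℝ≥0∞ → ℝ≥0∞),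
    Measurable f → (∀ i, Measurable (g i)) →
    ∫⁻ ω, f ω.1 * ∏ i : Fin n, g i (ω.2 i) ∂P
      = ∫⁻ ω, f ω.1 * ∏ i : Fin n, ∫⁻ s, g i s ∂expMeasE (ρ (ω.1 i)) ∂P

/-- The empirical measure `μ_T` of (2.2), as a measure on `E`. -/
def empMeas {E : Type*} [MeasurableSpace E] (T : ℝ) (ω : Traj E) : Measure E :=
  (ENNReal.ofReal T)⁻¹ •
    Measure.map (fun t => Traj.pos t ω) (MeasureTheory.volume.restrict (Set.Ioc 0 T))

open Classical in
/-- The empirical flow `Q_T`, as a measure on `E × E`: `(1/T)` times the sum of the Dirac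
masses at the jumps `(X_{t⁻}, X_t)` occurring at times `t ∈ [0,T]`. -/
def empFlow {E : Type*} [MeasurableSpace E] (T : ℝ) (ω : Traj E) : Measure (E × E) :=
  (ENNReal.ofReal T)⁻¹ • Measure.sum fun n : ℕ =>
    if Traj.jumpTime (n + 1) ω ≤ ENNReal.ofReal T ∧ ω.1 n ≠ ω.1 (n + 1)
    then Measure.dirac (ω.1 n, ω.1 (n + 1)) else 0

open Classical in
/-- Bundle a measure as a probability measure (junk value if it is not one). -/
def toPM {α : Type*} [MeasurableSpace α] [Nonempty α] (μ : Measure α) : ProbabilityMeasure α :=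
  if h : IsProbabilityMeasure μ then ⟨μ, h⟩
  else ⟨Measure.dirac (Classical.arbitrary α), by infer_instance⟩

open Classical in
/-- Bundle a measure as a finite measure (junk value if it is not one). -/
def toFM {α : Type*} [MeasurableSpace α] (μ : Measure α) : FiniteMeasure α :=
  if h : IsFiniteMeasure μ then ⟨μ, h⟩ else 0

/-- The pair empirical measure–empirical flow `(μ_T, Q_T)`, as a random element of
`M₁(E) × M₊(E×E)`. -/
def empPair {E : Type*} [MeasurableSpace E] [Nonempty E] (T : ℝ) (ω : Traj E) :
    ProbabilityMeasure E × FiniteMeasure (E × E) :=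
  (toPM (empMeas T ω), toFM (empFlow T ω))

variable {E : Type*} [MeasurableSpace E] [TopologicalSpace E] [PolishSpace E]
  [CompactSpace E] [BorelSpace E] [Nonempty E]

/-!
The density `p` is bounded below by some `c > 0` and above by some `C` on the compact space
`E × E`, so that `η ≤ p(x, ·) ≤ ν` for all `x`, with `η = cλ ≠ 0` and `ν = Cλ`. The lower bound
is a Doeblin condition: the skeleton forgets its initial state at the geometric rate
`(1 - η(E))ⁿ`. Hence the terms `f(Z_i) min(τ_i, k)`, with holding times truncated at a level `k`
and centred at their stationary mean, have geometrically decaying correlations, and their sum over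
`i < n` is `O(√n)` in `L²`, uniformly in the initial state. The upper bound controls the truncation
error in `L¹`: the law of `Z_i` for `i ≥ 1` and the law `π₀` are dominated by `ν`, so each of these
times contributes at most a constant times `∫ E[(τ - k)⁺] dν`, where `τ` is the holding time in the
integration variable; this tends to `0` as `k → ∞` because `ν(1/r) < ∞`. Only the first holding
time sees the initial state `x`, through its mean `1/r(x)`, which is bounded on compact subsets of
`{r > 0}`.
-/

/-! ### Moment bounds -/

section Moments

variable {Ω : Type*} [MeasurableSpace Ω] {μ : Measure Ω}

theorem abs_integral_le_of_forall_abs_le [IsProbabilityMeasure μ] {X : Ω → ℝ} {C : ℝ}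
    (hX : ∀ ω, |X ω| ≤ C) : |∫ ω, X ω ∂μ| ≤ C := by
  simpa using norm_integral_le_of_norm_le_const (μ := μ) (f := X) (ae_of_all _ hX)

theorem lintegral_enorm_le_ofReal_sqrt_integral_sq [IsProbabilityMeasure μ] {X : Ω → ℝ}
    (hX : MemLp X 2 μ) : ∫⁻ ω, ‖X ω‖ₑ ∂μ ≤ ENNReal.ofReal √(∫ ω, X ω ^ 2 ∂μ) := by
  rw [← ofReal_integral_norm_eq_lintegral_enorm (hX.integrable one_le_two)]
  refine ENNReal.ofReal_le_ofReal (Real.le_sqrt_of_sq_le ?_)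
  have hvar : variance (fun ω => ‖X ω‖) μ = ∫ ω, X ω ^ 2 ∂μ - (∫ ω, ‖X ω‖ ∂μ) ^ 2 := by
    simpa [Pi.pow_def] using variance_eq_sub hX.norm
  linarith [variance_nonneg (fun ω => ‖X ω‖) μ]

theorem sum_range_pow_sub_le {q : ℝ} (hq0 : 0 ≤ q) (hq1 : q < 1) (n : ℕ) :
    ∑ i ∈ Finset.range (n + 1), q ^ (n - i) ≤ (1 - q)⁻¹ := by
  have hreflect : ∑ i ∈ Finset.range (n + 1), q ^ (n - i) = ∑ i ∈ Finset.range (n + 1), q ^ i :=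
    Finset.sum_range_reflect (fun i => q ^ i) (n + 1)
  rw [hreflect, ← tsum_geometric_of_lt_one hq0 hq1]
  exact (summable_geometric_of_lt_one hq0 hq1).sum_le_tsum _ fun i _ => pow_nonneg hq0 i

theorem integral_sq_sum_range_le_of_geometric {W : ℕ → Ω → ℝ} (hW : ∀ i, MemLp (W i) 2 μ)
    {D q : ℝ} (hq0 : 0 ≤ q) (hq1 : q < 1)
    (hcov : ∀ i j, i ≤ j → ∫ ω, W i ω * W j ω ∂μ ≤ D * q ^ (j - i)) (n : ℕ) :
    ∫ ω, (∑ i ∈ Finset.range n, W i ω) ^ 2 ∂μ ≤ n * (2 * D / (1 - q)) := by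
  have hS (m : ℕ) : MemLp (fun ω => ∑ i ∈ Finset.range m, W i ω) 2 μ :=
    memLp_finsetSum _ fun i _ => hW i
  have hD : 0 ≤ D := by
    simpa using (integral_nonneg fun ω => mul_self_nonneg (W 0 ω)).trans (hcov 0 0 le_rfl)
  induction n with
  | zero => simp
  | succ n ih =>
    have hcross : ∫ ω, (∑ i ∈ Finset.range (n + 1), W i ω) * W n ω ∂μ ≤ D / (1 - q) := by
      calc ∫ ω, (∑ i ∈ Finset.range (n + 1), W i ω) * W n ω ∂μ
          = ∑ i ∈ Finset.range (n + 1), ∫ ω, W i ω * W n ω ∂μ := by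
            simp_rw [Finset.sum_mul]
            exact integral_finsetSum _ fun i _ => (hW i).integrable_mul (hW n)
        _ ≤ ∑ i ∈ Finset.range (n + 1), D * q ^ (n - i) :=
            Finset.sum_le_sum fun i hi => hcov i n (Finset.mem_range_succ_iff.1 hi)
        _ ≤ D / (1 - q) := by
            rw [← Finset.mul_sum, div_eq_mul_inv]
            exact mul_le_mul_of_nonneg_left (sum_range_pow_sub_le hq0 hq1 n) hD
    calc ∫ ω, (∑ i ∈ Finset.range (n + 1), W i ω) ^ 2 ∂μ
        ≤ ∫ ω, (∑ i ∈ Finset.range n, W i ω) ^ 2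
            + 2 * ((∑ i ∈ Finset.range (n + 1), W i ω) * W n ω) ∂μ := by
          refine integral_mono (hS _).integrable_sq ((hS n).integrable_sq.add
            (((hS _).integrable_mul (hW n)).const_mul 2)) fun ω => ?_
          simp only [Finset.sum_range_succ]
          nlinarith [sq_nonneg (W n ω)]
      _ = ∫ ω, (∑ i ∈ Finset.range n, W i ω) ^ 2 ∂μ
            + 2 * ∫ ω, (∑ i ∈ Finset.range (n + 1), W i ω) * W n ω ∂μ := by
          rw [← integral_const_mul]
          exact integral_add (hS n).integrable_sq (((hS _).integrable_mul (hW n)).const_mul 2)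
      _ ≤ n * (2 * D / (1 - q)) + 2 * (D / (1 - q)) := by gcongr
      _ = (n + 1 : ℕ) * (2 * D / (1 - q)) := by push_cast; ring

end Moments

/-! ### Exponential holding times -/

section Exponential

theorem lintegral_expMeasE_of_pos {ρ : ℝ} (hρ : 0 < ρ) {g : ℝ≥0∞ → ℝ≥0∞} (hg : Measurable g) :
    ∫⁻ s, g s ∂expMeasE ρ
      = ∫⁻ s in Ioi 0, ENNReal.ofReal (ρ * Real.exp (-(ρ * s))) * g (ENNReal.ofReal s) := by
  rw [expMeasE, if_pos hρ, lintegral_map hg ENNReal.measurable_ofReal,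
    lintegral_withDensity_eq_lintegral_mul _ (Measurable.indicator (by fun_prop) measurableSet_Ioi)
      (by fun_prop), ← lintegral_indicator measurableSet_Ioi]
  exact lintegral_congr fun s => (indicator_mul_left (Ioi 0) _ fun s => g (ENNReal.ofReal s)).symm

theorem expMeasE_of_nonpos {ρ : ℝ} (hρ : ρ ≤ 0) : expMeasE ρ = Measure.dirac ∞ :=
  if_neg hρ.not_gt

theorem lintegral_pow_expMeasE {ρ : ℝ} (hρ : 0 < ρ) (n : ℕ) :
    ∫⁻ s, s ^ n ∂expMeasE ρ = ENNReal.ofReal (n.factorial / ρ ^ n) := by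
  have hgamma : ∫ s in Ioi (0 : ℝ), s ^ n * Real.exp (-(ρ * s)) = n.factorial / ρ ^ (n + 1) := by
    have h := Real.integral_rpow_mul_exp_neg_mul_Ioi (a := n + 1) (r := ρ) (by positivity) hρ
    simp only [add_sub_cancel_right, Real.rpow_natCast, Real.Gamma_nat_eq_factorial] at h
    rw [h, ← Nat.cast_succ, Real.rpow_natCast, one_div, inv_pow]
    field_simp
  have hint : IntegrableOn (fun s : ℝ => s ^ n * Real.exp (-(ρ * s))) (Ioi 0) :=
    not_imp_comm.1 integral_undef (by rw [hgamma]; positivity)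
  calc ∫⁻ s, s ^ n ∂expMeasE ρ
      = ∫⁻ s in Ioi 0, ENNReal.ofReal (ρ * (s ^ n * Real.exp (-(ρ * s)))) := by
        rw [lintegral_expMeasE_of_pos hρ (by fun_prop)]
        refine setLIntegral_congr_fun measurableSet_Ioi fun s hs => ?_
        rw [← ENNReal.ofReal_pow (mem_Ioi.1 hs).le, ← ENNReal.ofReal_mul (by positivity)]
        ring_nf
    _ = ENNReal.ofReal (ρ * (n.factorial / ρ ^ (n + 1))) := by
        rw [← ofReal_integral_eq_lintegral_ofReal (hint.const_mul ρ), integral_const_mul, hgamma]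
        exact (ae_restrict_iff' measurableSet_Ioi).2 (ae_of_all _ fun s hs => by
          have : 0 < s := hs
          positivity)
    _ = ENNReal.ofReal (n.factorial / ρ ^ n) := by
        congr 1
        field_simp
        ring

instance (ρ : ℝ) : IsProbabilityMeasure (expMeasE ρ) := by
  rcases le_or_gt ρ 0 with hρ | hρ
  · rw [expMeasE_of_nonpos hρ]
    infer_instance
  · exact ⟨by simpa using lintegral_pow_expMeasE hρ 0⟩

theorem lintegral_id_expMeasE (ρ : ℝ) : ∫⁻ s, s ∂expMeasE ρ = (ENNReal.ofReal ρ)⁻¹ := by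
  rcases le_or_gt ρ 0 with hρ | hρ
  · simp [expMeasE_of_nonpos hρ, ENNReal.ofReal_of_nonpos hρ]
  · simpa [ENNReal.ofReal_inv_of_pos hρ] using lintegral_pow_expMeasE hρ 1

theorem measurable_expMeasE : Measurable expMeasE := by
  refine Measure.measurable_of_measurable_coe _ fun A hA => ?_
  let m (ρ : ℝ) : ℝ≥0∞ :=
    ∫⁻ s in Ioi 0, ENNReal.ofReal (ρ * Real.exp (-(ρ * s))) * A.indicator 1 (ENNReal.ofReal s)
  have hm : Measurable m := by
    refine Measurable.lintegral_prod_right' (f := fun z : ℝ × ℝ =>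
      ENNReal.ofReal (z.1 * Real.exp (-(z.1 * z.2))) * A.indicator 1 (ENNReal.ofReal z.2)) ?_
    exact Measurable.mul (by fun_prop) ((measurable_one.indicator hA).comp (by fun_prop))
  have hite : Measurable fun ρ => if 0 < ρ then m ρ else Measure.dirac ∞ A :=
    hm.ite measurableSet_Ioi measurable_const
  convert hite with ρ
  split_ifs with hρ
  · rw [← lintegral_indicator_one hA, lintegral_expMeasE_of_pos hρ (measurable_one.indicator hA)]
  · rw [expMeasE_of_nonpos (not_lt.1 hρ)]

variable {α : Type*} [MeasurableSpace α] {r : α → ℝ}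

/-- The conditional law of the holding time in a state, as a Markov kernel from states to times. -/
def holdingKernel (hr : Measurable r) : Kernel α ℝ≥0∞ where
  toFun x := expMeasE (r x)
  measurable' := measurable_expMeasE.comp hr

theorem holdingKernel_apply (hr : Measurable r) (x : α) :
    holdingKernel hr x = expMeasE (r x) := rfl

instance (hr : Measurable r) : IsMarkovKernel (holdingKernel hr) :=
  ⟨fun x => inferInstanceAs (IsProbabilityMeasure (expMeasE (r x)))⟩

/-- The expected excess `E[(τ - k)⁺]` over the level `k` of an exponential time `τ` of
parameter `ρ`; it measures the error made by truncating holding times at `k`. -/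
def meanExcess (k : ℝ≥0∞) (ρ : ℝ) : ℝ≥0∞ := ∫⁻ s, (s - k) ∂expMeasE ρ

@[fun_prop]
theorem measurable_meanExcess (k : ℝ≥0∞) : Measurable (meanExcess k) :=
  (Measure.measurable_lintegral (by fun_prop)).comp measurable_expMeasE

theorem meanExcess_le (k : ℝ≥0∞) (ρ : ℝ) : meanExcess k ρ ≤ (ENNReal.ofReal ρ)⁻¹ :=
  (lintegral_mono fun _ => tsub_le_self).trans_eq (lintegral_id_expMeasE ρ)

theorem tendsto_lintegral_tsub_natCast {μ : Measure α} {g : α → ℝ≥0∞} (hg : Measurable g)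
    (hint : ∫⁻ x, g x ∂μ ≠ ∞) : Tendsto (fun k : ℕ => ∫⁻ x, (g x - k) ∂μ) atTop (𝓝 0) := by
  rw [← lintegral_zero (μ := μ)]
  refine tendsto_lintegral_of_dominated_convergence g (fun k => by fun_prop)
    (fun k => ae_of_all _ fun x => tsub_le_self) hint ?_
  filter_upwards [ae_lt_top hg hint] with x hx
  simpa using ENNReal.Tendsto.sub (tendsto_const_nhds (x := g x))
    ENNReal.tendsto_nat_nhds_top (.inl hx.ne)

theorem tendsto_lintegral_meanExcess {ν : Measure α} (hr : Measurable r)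
    (hν : ∫⁻ x, (ENNReal.ofReal (r x))⁻¹ ∂ν ≠ ∞) :
    Tendsto (fun k : ℕ => ∫⁻ x, meanExcess k (r x) ∂ν) atTop (𝓝 0) := by
  rw [← lintegral_zero (μ := ν)]
  refine tendsto_lintegral_of_dominated_convergence _ (fun k => by fun_prop)
    (fun k => ae_of_all _ fun x => meanExcess_le k (r x)) hν ?_
  filter_upwards [ae_lt_top (by fun_prop) hν] with x hx
  exact tendsto_lintegral_tsub_natCast measurable_id
    ((lintegral_id_expMeasE (r x)).trans_lt hx).ne

end Exponential

/-! ### Doeblin contraction -/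

section Doeblin

variable {α : Type*} [MeasurableSpace α] {κ : Kernel α α} {η π : Measure α} {h : α → ℝ} {a b : ℝ}

instance isMarkovKernel_pow [IsMarkovKernel κ] (n : ℕ) : IsMarkovKernel (κ ^ n) := by
  induction n with
  | zero => exact inferInstanceAs (IsMarkovKernel Kernel.id)
  | succ n ih =>
    rw [pow_succ]
    exact inferInstanceAs (IsMarkovKernel ((κ ^ n) ∘ₖ κ))

theorem invariant_pow (hπ : κ.Invariant π) : ∀ n : ℕ, (κ ^ n).Invariant π
  | 0 => Measure.id_comp
  | n + 1 => by
    rw [pow_succ]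
    exact (invariant_pow hπ n).comp hπ

theorem integrable_of_mem_Icc {μ : Measure α} [IsFiniteMeasure μ] (hh : Measurable h)
    (hab : ∀ x, h x ∈ Icc a b) : Integrable h μ :=
  .of_mem_Icc a b hh.aemeasurable (ae_of_all _ hab)

theorem integral_mem_Icc_of_mem_Icc {μ : Measure α} [IsFiniteMeasure μ] (hh : Measurable h)
    (hab : ∀ x, h x ∈ Icc a b) :
    ∫ x, h x ∂μ ∈ Icc (μ.real univ * a) (μ.real univ * b) := by
  have hint := integrable_of_mem_Icc (μ := μ) hh hab
  constructor
  · simpa using integral_mono (integrable_const a) hint fun x => (hab x).1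
  · simpa using integral_mono hint (integrable_const b) fun x => (hab x).2

theorem integral_mem_Icc_of_le {μ : Measure α} [IsProbabilityMeasure μ] (hη : η ≤ μ)
    (hh : Measurable h) (hab : ∀ x, h x ∈ Icc a b) :
    ∫ x, h x ∂μ ∈ Icc (∫ x, h x ∂η + (1 - η.real univ) * a)
      (∫ x, h x ∂η + (1 - η.real univ) * b) := by
  have : IsFiniteMeasure η := isFiniteMeasure_of_le μ hη
  have hsplit : μ - η + η = μ := Measure.sub_add_cancel_of_le hη
  have hmass : (μ - η).real univ = 1 - η.real univ := by
    rw [eq_sub_iff_add_eq, ← measureReal_add_apply, hsplit, probReal_univ]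
  have hrest := integral_mem_Icc_of_mem_Icc (μ := μ - η) hh hab
  rw [hmass] at hrest
  rw [← congrArg (fun m => ∫ x, h x ∂m) hsplit, integral_add_measure
    (integrable_of_mem_Icc hh hab) (integrable_of_mem_Icc hh hab), add_comm (∫ x, h x ∂(μ - η))]
  exact ⟨by linarith [hrest.1], by linarith [hrest.2]⟩

theorem exists_integral_pow_mem_Icc [IsMarkovKernel κ] (hη : ∀ x, η ≤ κ x)
    (hh : Measurable h) (hab : ∀ x, h x ∈ Icc a b) (n : ℕ) :
    ∃ a' b', b' - a' = (1 - η.real univ) ^ n * (b - a) ∧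
      ∀ x, ∫ y, h y ∂(κ ^ n) x ∈ Icc a' b' := by
  induction n with
  | zero =>
    refine ⟨a, b, by simp, fun x => ?_⟩
    simpa using (integral_dirac' h x hh.stronglyMeasurable) ▸ hab x
  | succ n ih =>
    obtain ⟨a', b', hlen, hmem⟩ := ih
    have hstep (x : α) : ∫ y, h y ∂(κ ^ (n + 1)) x = ∫ z, ∫ y, h y ∂(κ ^ n) z ∂κ x := by
      rw [pow_succ]
      exact Kernel.integral_comp (integrable_of_mem_Icc hh hab)
    refine ⟨_, _, ?_, fun x => hstep x ▸ integral_mem_Icc_of_le (hη x)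
      hh.stronglyMeasurable.integral_kernel.measurable hmem⟩
    rw [pow_succ']
    linear_combination (1 - η.real univ) * hlen

theorem integral_integral_of_invariant [IsMarkovKernel κ] [IsFiniteMeasure π] (hπ : κ.Invariant π)
    (hh : Integrable h π) : ∫ x, ∫ y, h y ∂κ x ∂π = ∫ y, h y ∂π := by
  have hcomp : κ ∘ₖ Kernel.const Unit π = Kernel.const Unit π := by
    rw [Kernel.comp_const, hπ.def]
  calc ∫ x, ∫ y, h y ∂κ x ∂π = ∫ y, h y ∂(κ ∘ₖ Kernel.const Unit π) () :=
        (Kernel.integral_comp (by rwa [hcomp])).symm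
    _ = ∫ y, h y ∂π := by rw [hcomp, Kernel.const_apply]

theorem abs_integral_pow_sub_integral_le [IsMarkovKernel κ] [IsProbabilityMeasure π]
    (hη : ∀ x, η ≤ κ x) (hπ : κ.Invariant π) (hh : Measurable h) (hab : ∀ x, h x ∈ Icc a b)
    (n : ℕ) (x : α) :
    |∫ y, h y ∂(κ ^ n) x - ∫ y, h y ∂π| ≤ (1 - η.real univ) ^ n * (b - a) := by
  obtain ⟨a', b', hlen, hmem⟩ := exists_integral_pow_mem_Icc hη hh hab n
  have hmean : ∫ y, h y ∂π ∈ Icc a' b' := by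
    have hmeas := hh.stronglyMeasurable.integral_kernel (κ := κ ^ n)
    rw [← integral_integral_of_invariant (invariant_pow hπ n) (integrable_of_mem_Icc hh hab)]
    exact (convex_Icc a' b').integral_mem isClosed_Icc (ae_of_all _ hmem)
      (integrable_of_mem_Icc hmeas.measurable hmem)
  exact hlen ▸ Real.dist_le_of_mem_Icc (hmem x) hmean

end Doeblin

/-! ### Two-time laws of the chain -/

section Ext

variable {α β γ : Type*} [MeasurableSpace α] [MeasurableSpace β] [MeasurableSpace γ]

theorem ext_of_lintegral_mul {μ ν : Measure (α × β)} [IsFiniteMeasure μ]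
    (h : ∀ (φ : α → ℝ≥0∞) (ψ : β → ℝ≥0∞), Measurable φ → Measurable ψ →
      ∫⁻ z, φ z.1 * ψ z.2 ∂μ = ∫⁻ z, φ z.1 * ψ z.2 ∂ν) : μ = ν := by
  refine Measure.ext_prod fun {s t} hs ht => ?_
  rw [← lintegral_indicator_one (hs.prod ht), ← lintegral_indicator_one (hs.prod ht)]
  simpa only [← indicator_prod_one] using
    h _ _ (measurable_one.indicator hs) (measurable_one.indicator ht)

theorem ext_of_lintegral_mul_mul {μ ν : Measure (α × β × γ)} [IsFiniteMeasure μ]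
    (h : ∀ (φ : α → ℝ≥0∞) (a : β → ℝ≥0∞) (b : γ → ℝ≥0∞),
      Measurable φ → Measurable a → Measurable b →
      ∫⁻ z, φ z.1 * (a z.2.1 * b z.2.2) ∂μ = ∫⁻ z, φ z.1 * (a z.2.1 * b z.2.2) ∂ν) : μ = ν := by
  refine Measure.ext_prod₃ fun {s t u} hs ht hu => ?_
  rw [← lintegral_indicator_one (hs.prod (ht.prod hu)),
    ← lintegral_indicator_one (hs.prod (ht.prod hu))]
  simpa only [← indicator_prod_one] using h _ _ _ (measurable_one.indicator hs)
    (measurable_one.indicator ht) (measurable_one.indicator hu)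

end Ext

namespace IsChainLaw

variable {α : Type*} [MeasurableSpace α] {r : α → ℝ} {κ : Kernel α α} {x : α}
  {P : Measure (Traj α)}

theorem lintegral_mul_comp_add (hP : IsChainLaw r κ x P) (i d : ℕ) {φ ψ : α → ℝ≥0∞}
    (hφ : Measurable φ) (hψ : Measurable ψ) :
    ∫⁻ ω, φ (ω.1 i) * ψ (ω.1 (i + d)) ∂P
      = ∫⁻ ω, φ (ω.1 i) * ∫⁻ y, ψ y ∂(κ ^ d) (ω.1 i) ∂P := by
  induction d generalizing ψ with
  | zero =>
    refine lintegral_congr fun ω => ?_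
    exact congrArg _ (lintegral_dirac' (ω.1 i) hψ).symm
  | succ d ih =>
    have hcomp (z : α) : ∫⁻ y, ψ y ∂(κ ^ (d + 1)) z = ∫⁻ y, ∫⁻ y', ψ y' ∂κ y ∂(κ ^ d) z := by
      rw [pow_succ']
      exact Kernel.lintegral_comp _ _ _ hψ
    have hmarkov := hP.markov (i + d) (fun v => φ (v ⟨i, by omega⟩)) ψ (by fun_prop) hψ
    simp_rw [hcomp]
    exact hmarkov.trans (ih hψ.lintegral_kernel)

theorem map_prodMk_add [IsMarkovKernel κ] (hP : IsChainLaw r κ x P) (i d : ℕ) :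
    P.map (fun ω => (ω.1 i, ω.1 (i + d))) = P.map (fun ω => ω.1 i) ⊗ₘ (κ ^ d) := by
  have := hP.prob
  refine ext_of_lintegral_mul fun φ ψ hφ hψ => ?_
  rw [lintegral_map (by fun_prop) (by fun_prop), Measure.lintegral_compProd (by fun_prop)]
  simp only [lintegral_const_mul _ hψ]
  exact (hP.lintegral_mul_comp_add i d hφ hψ).trans
    (lintegral_map (hφ.mul hψ.lintegral_kernel) (by fun_prop)).symm

theorem integral_mul_comp_add [IsMarkovKernel κ] (hP : IsChainLaw r κ x P) (i d : ℕ)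
    {φ ψ : α → ℝ} (hφ : Measurable φ) (hψ : Measurable ψ)
    (hint : Integrable (fun ω => φ (ω.1 i) * ψ (ω.1 (i + d))) P) :
    ∫ ω, φ (ω.1 i) * ψ (ω.1 (i + d)) ∂P
      = ∫ ω, φ (ω.1 i) * ∫ y, ψ y ∂(κ ^ d) (ω.1 i) ∂P := by
  have := hP.prob
  have hpair : Measurable fun ω : Traj α => (ω.1 i, ω.1 (i + d)) := by fun_prop
  have hmul : StronglyMeasurable fun z : α × α => φ z.1 * ψ z.2 :=
    Measurable.stronglyMeasurable (by fun_prop)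
  have hinner := hψ.stronglyMeasurable.integral_kernel (κ := κ ^ d)
  calc ∫ ω, φ (ω.1 i) * ψ (ω.1 (i + d)) ∂P
      = ∫ z, φ z.1 * ψ z.2 ∂(P.map (fun ω => ω.1 i) ⊗ₘ (κ ^ d)) := by
        rw [← hP.map_prodMk_add, integral_map hpair.aemeasurable hmul.aestronglyMeasurable]
    _ = ∫ y, φ y * ∫ z, ψ z ∂(κ ^ d) y ∂P.map (fun ω => ω.1 i) := by
        rw [Measure.integral_compProd]
        · simp only [integral_const_mul]
        · rw [← hP.map_prodMk_add]
          exact (integrable_map_measure hmul.aestronglyMeasurable hpair.aemeasurable).2 hint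
    _ = ∫ ω, φ (ω.1 i) * ∫ y, ψ y ∂(κ ^ d) (ω.1 i) ∂P :=
        integral_map (by fun_prop)
          (hφ.stronglyMeasurable.mul hinner).aestronglyMeasurable

theorem lintegral_mul_holding_mul_holding (hP : IsChainLaw r κ x P) {i j : ℕ} (hij : i < j)
    {F : (ℕ → α) → ℝ≥0∞} {a b : ℝ≥0∞ → ℝ≥0∞} (hF : Measurable F) (ha : Measurable a)
    (hb : Measurable b) :
    ∫⁻ ω, F ω.1 * (a (ω.2 i) * b (ω.2 j)) ∂P
      = ∫⁻ ω, F ω.1 *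
          ((∫⁻ s, a s ∂expMeasE (r (ω.1 i))) * ∫⁻ s, b s ∂expMeasE (r (ω.1 j))) ∂P := by
  obtain ⟨i, rfl⟩ : ∃ i' : Fin (j + 1), (i' : ℕ) = i := ⟨⟨i, by omega⟩, rfl⟩
  have hne : i ≠ Fin.last j := Fin.lt_last_iff_ne_last.1 (Fin.lt_def.2 hij)
  have h := hP.holding (j + 1) F
    (fun l s => (if l = i then a s else 1) * (if l = Fin.last j then b s else 1)) hF
    (fun l => by split_ifs <;> fun_prop)
  have hfactor (l : Fin (j + 1)) (ρ : ℝ) :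
      ∫⁻ s, (if l = i then a s else 1) * (if l = Fin.last j then b s else 1) ∂expMeasE ρ
        = (if l = i then ∫⁻ s, a s ∂expMeasE ρ else 1) *
          (if l = Fin.last j then ∫⁻ s, b s ∂expMeasE ρ else 1) := by
    by_cases hi : l = i
    · simp [hi, hne]
    · simp only [hi, if_false, one_mul]
      split_ifs <;> simp
  simpa only [hfactor, Finset.prod_mul_distrib, Finset.prod_ite_eq', Finset.mem_univ,
    if_true, Fin.val_last] using h

theorem map_prodMk_holding (hr : Measurable r) (hP : IsChainLaw r κ x P) {i j : ℕ} (hij : i < j) :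
    P.map (fun ω => (ω.1, ω.2 i, ω.2 j))
      = P.map Prod.fst ⊗ₘ (((holdingKernel hr).comap (fun z : ℕ → α => z i) (by fun_prop)) ×ₖ
          ((holdingKernel hr).comap (fun z : ℕ → α => z j) (by fun_prop))) := by
  have := hP.prob
  refine ext_of_lintegral_mul_mul fun φ a b hφ ha hb => ?_
  have hmeas {g : ℝ≥0∞ → ℝ≥0∞} (hg : Measurable g) (l : ℕ) :
      Measurable fun z : ℕ → α => ∫⁻ s, g s ∂expMeasE (r (z l)) :=
    (hg.lintegral_kernel (κ := holdingKernel hr)).comp (measurable_pi_apply l)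
  rw [lintegral_map (by fun_prop) (by fun_prop), Measure.lintegral_compProd (by fun_prop)]
  have hprod (μ ν : Measure ℝ≥0∞) [SFinite ν] (c : ℝ≥0∞) :
      ∫⁻ p, c * (a p.1 * b p.2) ∂μ.prod ν = c * ((∫⁻ s, a s ∂μ) * ∫⁻ s, b s ∂ν) := by
    rw [lintegral_const_mul _ (by fun_prop),
      lintegral_prod_mul ha.aemeasurable hb.aemeasurable]
  simp only [Kernel.prod_apply, Kernel.comap_apply, holdingKernel_apply, hprod]
  exact (hP.lintegral_mul_holding_mul_holding hij hφ ha hb).trans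
    (lintegral_map (hφ.mul ((hmeas ha i).mul (hmeas hb j))) measurable_fst).symm

theorem integral_mul_holding (hr : Measurable r) (hP : IsChainLaw r κ x P) {i j : ℕ} (hij : i < j)
    {u v : α × ℝ≥0∞ → ℝ} (hu : Measurable u) (hv : Measurable v)
    (hint : Integrable (fun ω => u (ω.1 i, ω.2 i) * v (ω.1 j, ω.2 j)) P) :
    ∫ ω, u (ω.1 i, ω.2 i) * v (ω.1 j, ω.2 j) ∂P
      = ∫ ω, (∫ s, u (ω.1 i, s) ∂expMeasE (r (ω.1 i))) *
          ∫ s, v (ω.1 j, s) ∂expMeasE (r (ω.1 j)) ∂P := by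
  have := hP.prob
  have htriple : Measurable fun ω : Traj α => (ω.1, ω.2 i, ω.2 j) := by fun_prop
  have hmul : StronglyMeasurable
      fun z : (ℕ → α) × ℝ≥0∞ × ℝ≥0∞ => u (z.1 i, z.2.1) * v (z.1 j, z.2.2) :=
    Measurable.stronglyMeasurable (by fun_prop)
  have hmean {g : α × ℝ≥0∞ → ℝ} (hg : Measurable g) (l : ℕ) :
      Measurable fun z : ℕ → α => ∫ s, g (z l, s) ∂expMeasE (r (z l)) :=
    (hg.stronglyMeasurable.integral_kernel_prod_right' (κ := holdingKernel hr)).measurable.comp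
      (measurable_pi_apply l)
  rw [← integral_map (f := fun z : (ℕ → α) × ℝ≥0∞ × ℝ≥0∞ => u (z.1 i, z.2.1) * v (z.1 j, z.2.2))
      htriple.aemeasurable hmul.aestronglyMeasurable,
    hP.map_prodMk_holding hr hij, Measure.integral_compProd]
  · simp only [Kernel.prod_apply, Kernel.comap_apply, holdingKernel_apply]
    refine (integral_congr_ae (ae_of_all _ fun z : ℕ → α =>
      integral_prod_mul (fun s => u (z i, s)) fun s => v (z j, s))).trans ?_
    exact integral_map (by fun_prop) ((hmean hu i).mul (hmean hv j)).aestronglyMeasurable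
  · rw [← hP.map_prodMk_holding hr hij]
    exact (integrable_map_measure hmul.aestronglyMeasurable htriple.aemeasurable).2 hint

end IsChainLaw

/-! ### Fluctuations and tails of additive functionals -/

namespace IsChainLaw

variable {α : Type*} [MeasurableSpace α] {r : α → ℝ} {κ : Kernel α α} {x : α}
  {P : Measure (Traj α)} {η ν π : Measure α} {w : α × ℝ≥0∞ → ℝ} {H : ℝ}

theorem abs_integral_mul_comp_add_le [IsMarkovKernel κ] [IsProbabilityMeasure π]
    (hP : IsChainLaw r κ x P) (hη : ∀ x, η ≤ κ x) (hπ : κ.Invariant π) {m : α → ℝ}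
    (hm : Measurable m) (hH : ∀ y, |m y| ≤ H) (hm0 : ∫ y, m y ∂π = 0) (i d : ℕ) :
    |∫ ω, m (ω.1 i) * m (ω.1 (i + d)) ∂P| ≤ 2 * H ^ 2 * (1 - η.real univ) ^ d := by
  have := hP.prob
  have hH0 : 0 ≤ H := (abs_nonneg _).trans (hH x)
  have hmix (y : α) : |∫ z, m z ∂(κ ^ d) y| ≤ (1 - η.real univ) ^ d * (2 * H) := by
    simpa [hm0, two_mul] using
      abs_integral_pow_sub_integral_le hη hπ hm (fun y => abs_le.1 (hH y)) d y
  have hint : Integrable (fun ω => m (ω.1 i) * m (ω.1 (i + d))) P :=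
    .of_bound (Measurable.aestronglyMeasurable (by fun_prop)) (H * H) <| ae_of_all _ fun ω => by
      rw [norm_mul]
      exact mul_le_mul (hH _) (hH _) (norm_nonneg _) hH0
  calc |∫ ω, m (ω.1 i) * m (ω.1 (i + d)) ∂P|
      = |∫ ω, m (ω.1 i) * ∫ y, m y ∂(κ ^ d) (ω.1 i) ∂P| := by
        rw [hP.integral_mul_comp_add i d hm hm hint]
    _ ≤ H * ((1 - η.real univ) ^ d * (2 * H)) := by
        refine abs_integral_le_of_forall_abs_le fun ω => ?_
        rw [abs_mul]
        exact mul_le_mul (hH _) (hmix _) (abs_nonneg _) hH0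
    _ = 2 * H ^ 2 * (1 - η.real univ) ^ d := by ring

theorem abs_integral_mul_holding_le [IsMarkovKernel κ] [IsProbabilityMeasure π]
    (hr : Measurable r) (hP : IsChainLaw r κ x P) (hη : ∀ x, η ≤ κ x) (hπ : κ.Invariant π)
    (hw : Measurable w) (hH : ∀ z, |w z| ≤ H)
    (hw0 : ∫ z, w z ∂(π ⊗ₘ holdingKernel hr) = 0) {i j : ℕ} (hij : i ≤ j) :
    |∫ ω, w (ω.1 i, ω.2 i) * w (ω.1 j, ω.2 j) ∂P|
      ≤ 2 * H ^ 2 * (1 - η.real univ) ^ (j - i) := by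
  have := hP.prob
  have hH0 : 0 ≤ H := (abs_nonneg _).trans (hH (x, 0))
  have hbound (ω : Traj α) : ‖w (ω.1 i, ω.2 i) * w (ω.1 j, ω.2 j)‖ ≤ H ^ 2 := by
    rw [norm_mul, sq]
    exact mul_le_mul (hH _) (hH _) (norm_nonneg _) hH0
  obtain rfl | hlt := hij.eq_or_lt
  · refine (abs_integral_le_of_forall_abs_le hbound).trans ?_
    rw [Nat.sub_self]
    nlinarith [sq_nonneg H]
  have hint : Integrable (fun ω => w (ω.1 i, ω.2 i) * w (ω.1 j, ω.2 j)) P :=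
    .of_bound (Measurable.aestronglyMeasurable (by fun_prop)) _ (ae_of_all _ hbound)
  let m (y : α) : ℝ := ∫ s, w (y, s) ∂expMeasE (r y)
  have hm : Measurable m :=
    (hw.stronglyMeasurable.integral_kernel_prod_right' (κ := holdingKernel hr)).measurable
  have hmH (y : α) : |m y| ≤ H := abs_integral_le_of_forall_abs_le fun s => hH (y, s)
  have hm0 : ∫ y, m y ∂π = 0 := by
    rw [← hw0, Measure.integral_compProd (.of_bound hw.aestronglyMeasurable H (ae_of_all _ hH))]
    rfl
  rw [hP.integral_mul_holding hr hlt hw hw hint]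
  simpa only [Nat.add_sub_cancel' hij] using
    hP.abs_integral_mul_comp_add_le hη hπ hm hmH hm0 i (j - i)

theorem lintegral_enorm_sum_le [IsMarkovKernel κ] [IsProbabilityMeasure π]
    (hr : Measurable r) (hP : IsChainLaw r κ x P) (hη : ∀ x, η ≤ κ x) (hη0 : η ≠ 0)
    (hπ : κ.Invariant π) (hw : Measurable w) (hH : ∀ z, |w z| ≤ H)
    (hw0 : ∫ z, w z ∂(π ⊗ₘ holdingKernel hr) = 0) (n : ℕ) :
    ∫⁻ ω, ‖∑ i ∈ Finset.range n, w (ω.1 i, ω.2 i)‖ₑ ∂P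
      ≤ ENNReal.ofReal √(n * (2 * (2 * H ^ 2) / η.real univ)) := by
  have := hP.prob
  have : IsFiniteMeasure η := isFiniteMeasure_of_le _ (hη x)
  have hmass0 : 0 < η.real univ :=
    ENNReal.toReal_pos (Measure.measure_univ_ne_zero.2 hη0) (measure_ne_top η univ)
  have hmass1 : η.real univ ≤ 1 :=
    (ENNReal.toReal_mono (measure_ne_top _ _) (hη x univ)).trans_eq (probReal_univ (μ := κ x))
  have hL2 (i : ℕ) : MemLp (fun ω : Traj α => w (ω.1 i, ω.2 i)) 2 P :=
    .of_bound (Measurable.aestronglyMeasurable (by fun_prop)) H (ae_of_all _ fun ω => hH _)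
  have hsq := integral_sq_sum_range_le_of_geometric hL2 (q := 1 - η.real univ)
    (sub_nonneg.2 hmass1) (sub_lt_self 1 hmass0)
    (fun i j hij => (le_abs_self _).trans (hP.abs_integral_mul_holding_le hr hη hπ hw hH hw0 hij)) n
  rw [_root_.sub_sub_cancel] at hsq
  exact (lintegral_enorm_le_ofReal_sqrt_integral_sq (memLp_finsetSum _ fun i _ => hL2 i)).trans
    (ENNReal.ofReal_le_ofReal (Real.sqrt_le_sqrt hsq))

theorem lintegral_holding (hP : IsChainLaw r κ x P) (i : ℕ) {g : ℝ≥0∞ → ℝ≥0∞}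
    (hg : Measurable g) : ∫⁻ ω, g (ω.2 i) ∂P = ∫⁻ ω, ∫⁻ s, g s ∂expMeasE (r (ω.1 i)) ∂P := by
  simpa using hP.lintegral_mul_holding_mul_holding (Nat.lt_succ_self i) (F := 1) measurable_one hg
    (b := 1) measurable_one

theorem lintegral_comp_zero (hP : IsChainLaw r κ x P) {φ : α → ℝ≥0∞} (hφ : Measurable φ) :
    ∫⁻ ω, φ (ω.1 0) ∂P = φ x := by
  rw [← lintegral_map hφ (by fun_prop), hP.init, lintegral_dirac' x hφ]

theorem lintegral_comp_succ_le (hP : IsChainLaw r κ x P) (hν : ∀ x, κ x ≤ ν) (i : ℕ)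
    {φ : α → ℝ≥0∞} (hφ : Measurable φ) : ∫⁻ ω, φ (ω.1 (i + 1)) ∂P ≤ ∫⁻ y, φ y ∂ν := by
  have := hP.prob
  calc ∫⁻ ω, φ (ω.1 (i + 1)) ∂P = ∫⁻ ω, ∫⁻ y, φ y ∂κ (ω.1 i) ∂P := by
        simpa using hP.markov i 1 φ measurable_one hφ
    _ ≤ ∫⁻ _, ∫⁻ y, φ y ∂ν ∂P := lintegral_mono fun ω => lintegral_mono' (hν _) le_rfl
    _ = ∫⁻ y, φ y ∂ν := by simp

theorem lintegral_sum_holding_sub_le (hr : Measurable r) (hP : IsChainLaw r κ x P)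
    (hν : ∀ x, κ x ≤ ν) (k : ℝ≥0∞) (n : ℕ) :
    ∫⁻ ω, ∑ i ∈ Finset.range n, (ω.2 i - k) ∂P
      ≤ (ENNReal.ofReal (r x))⁻¹ + n * ∫⁻ y, meanExcess k (r y) ∂ν := by
  rw [lintegral_finsetSum _ fun i _ => by fun_prop]
  have hexcess (i : ℕ) : ∫⁻ ω, (ω.2 i - k) ∂P = ∫⁻ ω, meanExcess k (r (ω.1 i)) ∂P :=
    hP.lintegral_holding i (g := fun s => s - k) (by fun_prop)
  have hmeas : Measurable fun y => meanExcess k (r y) := by fun_prop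
  cases n with
  | zero => simp
  | succ n =>
    rw [Finset.sum_range_succ', add_comm]
    gcongr
    · rw [hexcess, hP.lintegral_comp_zero hmeas]
      exact meanExcess_le k (r x)
    · refine (Finset.sum_le_card_nsmul _ _ _ fun i _ =>
        (hexcess (i + 1)).trans_le (hP.lintegral_comp_succ_le hν i hmeas)).trans ?_
      rw [Finset.card_range, nsmul_eq_mul]
      gcongr
      exact n.le_succ

end IsChainLaw

/-! ### Truncated holding times -/

section Truncation

variable {α : Type*} {f : α → ℝ} {B : ℝ} {k : ℝ≥0∞}

/-- The contribution `f(y) min(s, k)` of a visit to `y` of duration `s` to the weighted sum, with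
the holding time truncated at level `k`. -/
def truncatedWeight (f : α → ℝ) (k : ℝ≥0∞) (z : α × ℝ≥0∞) : ℝ := f z.1 * (min z.2 k).toReal

theorem abs_truncatedWeight_le (hB : ∀ y, |f y| ≤ B) (hk : k ≠ ∞) (z : α × ℝ≥0∞) :
    |truncatedWeight f k z| ≤ B * k.toReal := by
  rw [truncatedWeight, abs_mul, abs_of_nonneg toReal_nonneg]
  exact mul_le_mul (hB _) (toReal_mono hk (min_le_right _ _)) toReal_nonneg
    ((abs_nonneg _).trans (hB z.1))

theorem enorm_sub_truncatedWeight_le (hB : ∀ y, |f y| ≤ B) (hk : k ≠ ∞) (z : α × ℝ≥0∞) :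
    ‖f z.1 * z.2.toReal - truncatedWeight f k z‖ₑ ≤ ENNReal.ofReal B * (z.2 - k) := by
  rw [truncatedWeight, ← mul_sub, enorm_mul, Real.enorm_eq_ofReal_abs]
  gcongr
  · exact hB z.1
  obtain hs | hs := eq_or_ne z.2 ∞
  · simp [hs, hk]
  · have hsplit : z.2.toReal = (z.2 - k).toReal + (min z.2 k).toReal := by
      rw [← toReal_add (by finiteness) (ne_top_of_le_ne_top hk (min_le_right _ _)),
        tsub_add_min]
    rw [hsplit, add_sub_cancel_right, Real.enorm_toReal (by finiteness)]

/-- The average `(1/n) ∑_{i<n} f(Z_i) τ_i` of `f` along the skeleton, weighted by the holding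
times (an infinite holding time is given weight `0`). -/
def weightedAverage (f : α → ℝ) (n : ℕ) (ω : Traj α) : ℝ :=
  (1 / (n : ℝ)) * ∑ i ∈ Finset.range n, f (ω.1 i) * (ω.2 i).toReal

theorem enorm_weightedAverage_sub_le (hB : ∀ y, |f y| ≤ B) (hk : k ≠ ∞) {n : ℕ} (hn : n ≠ 0)
    (m c : ℝ) (ω : Traj α) :
    ‖weightedAverage f n ω - c‖ₑ
      ≤ (n : ℝ≥0∞)⁻¹ * (ENNReal.ofReal B * ∑ i ∈ Finset.range n, (ω.2 i - k)
          + ‖∑ i ∈ Finset.range n, (truncatedWeight f k (ω.1 i, ω.2 i) - m)‖ₑ) + ‖m - c‖ₑ := by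
  have hn' : (n : ℝ) ≠ 0 := Nat.cast_ne_zero.2 hn
  have hsplit : weightedAverage f n ω - c
      = (n : ℝ)⁻¹ * (∑ i ∈ Finset.range n,
            (f (ω.1 i) * (ω.2 i).toReal - truncatedWeight f k (ω.1 i, ω.2 i))
          + ∑ i ∈ Finset.range n, (truncatedWeight f k (ω.1 i, ω.2 i) - m)) + (m - c) := by
    simp only [weightedAverage, Finset.sum_sub_distrib, Finset.sum_const, Finset.card_range,
      nsmul_eq_mul]
    field_simp
    ring
  have hinv : ‖(n : ℝ)⁻¹‖ₑ = (n : ℝ≥0∞)⁻¹ := by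
    rw [enorm_inv hn', Real.enorm_natCast]
  rw [hsplit]
  refine (enorm_add_le _ _).trans ?_
  rw [enorm_mul, hinv, Finset.mul_sum]
  gcongr
  refine (enorm_add_le _ _).trans ?_
  gcongr
  exact (enorm_sum_le _ _).trans
    (Finset.sum_le_sum fun i _ => enorm_sub_truncatedWeight_le hB hk (ω.1 i, ω.2 i))

variable [MeasurableSpace α] {r : α → ℝ} {κ : Kernel α α} {ν π : Measure α}

theorem measurable_truncatedWeight (hf : Measurable f) (k : ℝ≥0∞) :
    Measurable (truncatedWeight f k) :=
  (hf.comp measurable_fst).mul (measurable_snd.min measurable_const).ennreal_toReal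

theorem measurable_weightedAverage (hf : Measurable f) (n : ℕ) :
    Measurable (weightedAverage f n) := by
  unfold weightedAverage
  fun_prop

theorem lintegral_compProd_holdingKernel (hr : Measurable r) (π : Measure α) [SFinite π]
    {g : ℝ≥0∞ → ℝ≥0∞} (hg : Measurable g) :
    ∫⁻ z, g z.2 ∂(π ⊗ₘ holdingKernel hr) = ∫⁻ y, ∫⁻ s, g s ∂expMeasE (r y) ∂π :=
  Measure.lintegral_compProd (hg.comp measurable_snd)

theorem integrable_mul_toReal [SFinite π] (hr : Measurable r)
    (hπr : ∫⁻ y, (ENNReal.ofReal (r y))⁻¹ ∂π ≠ ∞) (hf : Measurable f) (hB : ∀ y, |f y| ≤ B) :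
    Integrable (fun z => f z.1 * z.2.toReal) (π ⊗ₘ holdingKernel hr) := by
  have htime : ∫⁻ z, z.2 ∂(π ⊗ₘ holdingKernel hr) ≠ ∞ := by
    rw [lintegral_compProd_holdingKernel hr π (g := fun s => s) measurable_id]
    simpa only [lintegral_id_expMeasE] using hπr
  exact (integrable_toReal_of_lintegral_ne_top measurable_snd.aemeasurable htime).bdd_mul
    (hf.comp measurable_fst).aestronglyMeasurable (ae_of_all _ fun z => hB z.1)

theorem integral_mul_toReal [SFinite π] (hr : Measurable r)
    (hπr : ∫⁻ y, (ENNReal.ofReal (r y))⁻¹ ∂π ≠ ∞) (hf : Measurable f) (hB : ∀ y, |f y| ≤ B) :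
    ∫ z, f z.1 * z.2.toReal ∂(π ⊗ₘ holdingKernel hr) = ∫ y, f y / r y ∂π := by
  rw [Measure.integral_compProd (integrable_mul_toReal hr hπr hf hB)]
  refine integral_congr_ae ?_
  filter_upwards [ae_lt_top (by fun_prop) hπr] with y hy
  have hmean : ∫⁻ s, s ∂expMeasE (r y) ≠ ∞ := by rwa [lintegral_id_expMeasE, ← lt_top_iff_ne_top]
  have hpos : 0 < r y := by simpa using hy
  rw [integral_const_mul, holdingKernel_apply,
    integral_toReal (f := fun s => s) (by fun_prop) (ae_lt_top measurable_id hmean),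
    lintegral_id_expMeasE, toReal_inv, toReal_ofReal hpos.le, div_eq_mul_inv]

theorem enorm_integral_truncatedWeight_sub_le [IsFiniteMeasure π] (hr : Measurable r)
    (hπr : ∫⁻ y, (ENNReal.ofReal (r y))⁻¹ ∂π ≠ ∞) (hf : Measurable f) (hB : ∀ y, |f y| ≤ B)
    (hk : k ≠ ∞) :
    ‖∫ z, truncatedWeight f k z ∂(π ⊗ₘ holdingKernel hr) - ∫ y, f y / r y ∂π‖ₑ
      ≤ ENNReal.ofReal B * ∫⁻ y, meanExcess k (r y) ∂π := by
  have htrunc : Integrable (truncatedWeight f k) (π ⊗ₘ holdingKernel hr) :=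
    .of_bound (measurable_truncatedWeight hf k).aestronglyMeasurable _
      (ae_of_all _ (abs_truncatedWeight_le hB hk))
  calc ‖∫ z, truncatedWeight f k z ∂(π ⊗ₘ holdingKernel hr) - ∫ y, f y / r y ∂π‖ₑ
      = ‖∫ z, (f z.1 * z.2.toReal - truncatedWeight f k z) ∂(π ⊗ₘ holdingKernel hr)‖ₑ := by
        rw [integral_sub (integrable_mul_toReal hr hπr hf hB) htrunc,
          integral_mul_toReal hr hπr hf hB, ← enorm_neg, neg_sub]
    _ ≤ ∫⁻ z, ENNReal.ofReal B * (z.2 - k) ∂(π ⊗ₘ holdingKernel hr) :=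
        (enorm_integral_le_lintegral_enorm _).trans
          (lintegral_mono (enorm_sub_truncatedWeight_le hB hk))
    _ = ENNReal.ofReal B * ∫⁻ y, meanExcess k (r y) ∂π := by
        rw [lintegral_const_mul _ (by fun_prop),
          lintegral_compProd_holdingKernel hr π (g := fun s => s - k) (by fun_prop)]
        rfl

theorem le_of_invariant_of_forall_le [IsProbabilityMeasure π] (hπ : κ.Invariant π)
    (hν : ∀ x, κ x ≤ ν) : π ≤ ν := by
  refine Measure.le_iff.2 fun s hs => ?_
  calc π s = ∫⁻ y, κ y s ∂π := by
        conv_lhs => rw [← hπ.def, Measure.bind_apply hs κ.measurable.aemeasurable]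
    _ ≤ ∫⁻ _, ν s ∂π := lintegral_mono fun y => hν y s
    _ = ν s := by simp

end Truncation

namespace IsChainLaw

variable {α : Type*} [MeasurableSpace α] {r : α → ℝ} {κ : Kernel α α} [IsMarkovKernel κ]
  {η ν π : Measure α} [IsProbabilityMeasure π] {f : α → ℝ} {B : ℝ} {k : ℝ≥0∞} {x : α}
  {P : Measure (Traj α)}

theorem lintegral_enorm_sum_truncatedWeight_le (hr : Measurable r) (hP : IsChainLaw r κ x P)
    (hη : ∀ x, η ≤ κ x) (hη0 : η ≠ 0) (hπ : κ.Invariant π) (hf : Measurable f)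
    (hB : ∀ y, |f y| ≤ B) (hk : k ≠ ∞) (n : ℕ) :
    ∫⁻ ω, ‖∑ i ∈ Finset.range n, (truncatedWeight f k (ω.1 i, ω.2 i)
        - ∫ z, truncatedWeight f k z ∂(π ⊗ₘ holdingKernel hr))‖ₑ ∂P
      ≤ ENNReal.ofReal √(n * (2 * (2 * (2 * (B * k.toReal)) ^ 2) / η.real univ)) := by
  have hmeas := measurable_truncatedWeight hf k
  have hbound := abs_truncatedWeight_le hB hk
  have hint : Integrable (truncatedWeight f k) (π ⊗ₘ holdingKernel hr) :=
    .of_bound hmeas.aestronglyMeasurable _ (ae_of_all _ hbound)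
  refine hP.lintegral_enorm_sum_le hr hη hη0 hπ (hmeas.sub measurable_const) (fun z => ?_) ?_ n
  · rw [two_mul]
    exact (abs_sub _ _).trans (add_le_add (hbound z) (abs_integral_le_of_forall_abs_le hbound))
  · rw [integral_sub' hint (integrable_const _), integral_const, probReal_univ, one_smul, sub_self]

theorem lintegral_enorm_weightedAverage_sub_le (hr : Measurable r) (hP : IsChainLaw r κ x P)
    (hη : ∀ x, η ≤ κ x) (hη0 : η ≠ 0) (hν : ∀ x, κ x ≤ ν)
    (hνr : ∫⁻ y, (ENNReal.ofReal (r y))⁻¹ ∂ν ≠ ∞) (hπ : κ.Invariant π) (hf : Measurable f)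
    (hB : ∀ y, |f y| ≤ B) (hk : k ≠ ∞) {n : ℕ} (hn : n ≠ 0) :
    ∫⁻ ω, ‖weightedAverage f n ω - ∫ y, f y / r y ∂π‖ₑ ∂P
      ≤ (n : ℝ≥0∞)⁻¹ * (ENNReal.ofReal B * (ENNReal.ofReal (r x))⁻¹ + ENNReal.ofReal
            √(n * (2 * (2 * (2 * (B * k.toReal)) ^ 2) / η.real univ)))
        + 2 * (ENNReal.ofReal B * ∫⁻ y, meanExcess k (r y) ∂ν) := by
  have := hP.prob
  have hπν := le_of_invariant_of_forall_le hπ hν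
  have hn' : (n : ℝ≥0∞) ≠ 0 := Nat.cast_ne_zero.2 hn
  set m := ∫ z, truncatedWeight f k z ∂(π ⊗ₘ holdingKernel hr)
  set e := ENNReal.ofReal B * ∫⁻ y, meanExcess k (r y) ∂ν with he
  have hmeas := measurable_truncatedWeight hf k
  have hbias : ‖m - ∫ y, f y / r y ∂π‖ₑ ≤ e :=
    (enorm_integral_truncatedWeight_sub_le hr (ne_top_of_le_ne_top hνr
      (lintegral_mono' hπν le_rfl)) hf hB hk).trans
      (mul_le_mul_right (lintegral_mono' hπν le_rfl) _)
  calc ∫⁻ ω, ‖weightedAverage f n ω - ∫ y, f y / r y ∂π‖ₑ ∂P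
      ≤ ∫⁻ ω, ((n : ℝ≥0∞)⁻¹ * (ENNReal.ofReal B * ∑ i ∈ Finset.range n, (ω.2 i - k)
          + ‖∑ i ∈ Finset.range n, (truncatedWeight f k (ω.1 i, ω.2 i) - m)‖ₑ) + e) ∂P :=
        lintegral_mono fun ω => (enorm_weightedAverage_sub_le hB hk hn m _ ω).trans (by gcongr)
    _ = (n : ℝ≥0∞)⁻¹ * (ENNReal.ofReal B * ∫⁻ ω, ∑ i ∈ Finset.range n, (ω.2 i - k) ∂P
          + ∫⁻ ω, ‖∑ i ∈ Finset.range n, (truncatedWeight f k (ω.1 i, ω.2 i) - m)‖ₑ ∂P) + e := by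
        rw [lintegral_add_right _ measurable_const, lintegral_const, measure_univ, mul_one,
          lintegral_const_mul _ (by fun_prop), lintegral_add_left (by fun_prop),
          lintegral_const_mul _ (by fun_prop)]
    _ ≤ (n : ℝ≥0∞)⁻¹ * (ENNReal.ofReal B * ((ENNReal.ofReal (r x))⁻¹
          + n * ∫⁻ y, meanExcess k (r y) ∂ν) + ENNReal.ofReal
            √(n * (2 * (2 * (2 * (B * k.toReal)) ^ 2) / η.real univ))) + e := by
        gcongr
        · exact hP.lintegral_sum_holding_sub_le hr hν k n
        · exact hP.lintegral_enorm_sum_truncatedWeight_le hr hη hη0 hπ hf hB hk n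
    _ = _ := by
        rw [mul_add (ENNReal.ofReal B), mul_left_comm (ENNReal.ofReal B), ← he, add_right_comm,
          mul_add _ _ (n * e), ENNReal.inv_mul_cancel_left hn' (natCast_ne_top n)]
        ring

end IsChainLaw

/-! ### The law of large numbers -/

theorem tendsto_zero_of_forall_le_add {ι : Type*} {l : Filter ι} {u : ι → ℝ≥0∞}
    {a : ℕ → ι → ℝ≥0∞} {e : ℕ → ℝ≥0∞} (hle : ∀ k, ∀ᶠ n in l, u n ≤ a k n + e k)
    (ha : ∀ k, Tendsto (a k) l (𝓝 0)) (he : Tendsto e atTop (𝓝 0)) :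
    Tendsto u l (𝓝 0) := by
  refine ENNReal.tendsto_nhds_zero.2 fun ε hε => ?_
  have hε2 : 0 < ε / 2 := ENNReal.half_pos hε.ne'
  obtain ⟨k, hk⟩ := (ENNReal.tendsto_nhds_zero.1 he (ε / 2) hε2).exists
  filter_upwards [hle k, ENNReal.tendsto_nhds_zero.1 (ha k) (ε / 2) hε2] with n hn han
  exact hn.trans ((add_le_add han hk).trans_eq (ENNReal.add_halves ε))

theorem tendsto_inv_natCast_mul_add_ofReal_sqrt {D : ℝ≥0∞} (hD : D ≠ ∞) (C : ℝ) :
    Tendsto (fun n : ℕ => (n : ℝ≥0∞)⁻¹ * (D + ENNReal.ofReal √(n * C))) atTop (𝓝 0) := by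
  have hconst : Tendsto (fun n : ℕ => (n : ℝ≥0∞)⁻¹ * D) atTop (𝓝 0) := by
    simpa using ENNReal.Tendsto.mul_const ENNReal.tendsto_inv_nat_nhds_zero (.inr hD)
  have hreal : Tendsto (fun n : ℕ => √C / √n) atTop (𝓝 0) :=
    tendsto_const_nhds.div_atTop (Real.tendsto_sqrt_atTop.comp tendsto_natCast_atTop_atTop)
  have hsqrt : Tendsto (fun n : ℕ => (n : ℝ≥0∞)⁻¹ * ENNReal.ofReal √(n * C)) atTop (𝓝 0) := by
    refine (ENNReal.ofReal_zero ▸ tendsto_ofReal hreal).congr' ?_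
    filter_upwards [eventually_gt_atTop 0] with n hn
    have hn' : (0 : ℝ) < n := Nat.cast_pos.2 hn
    rw [← ofReal_natCast n, ← ofReal_inv_of_pos hn', ← ofReal_mul (by positivity),
      Real.sqrt_mul hn'.le, ← mul_assoc, inv_mul_eq_div, Real.sqrt_div_self', one_div_mul_eq_div]
  simpa only [mul_add, add_zero] using hconst.add hsqrt

section General

variable {α : Type*} [MeasurableSpace α] {r : α → ℝ} {κ : Kernel α α} [IsMarkovKernel κ]
  {η ν π : Measure α} [IsProbabilityMeasure π] {f : α → ℝ} {B δ : ℝ} {P : α → Measure (Traj α)}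
  {K : Set α}

theorem tendsto_iSup_lintegral_enorm_weightedAverage_sub (hr : Measurable r)
    (hP : ∀ x ∈ K, IsChainLaw r κ x (P x)) (hη : ∀ x, η ≤ κ x) (hη0 : η ≠ 0)
    (hν : ∀ x, κ x ≤ ν) (hνr : ∫⁻ y, (ENNReal.ofReal (r y))⁻¹ ∂ν ≠ ∞) (hπ : κ.Invariant π)
    (hf : Measurable f) (hB : ∀ y, |f y| ≤ B) (hδ : 0 < δ) (hK : ∀ x ∈ K, δ ≤ r x) :
    Tendsto (fun n => ⨆ x ∈ K, ∫⁻ ω, ‖weightedAverage f n ω - ∫ y, f y / r y ∂π‖ₑ ∂P x)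
      atTop (𝓝 0) := by
  have hexcess := ENNReal.Tendsto.const_mul (ENNReal.Tendsto.const_mul
    (tendsto_lintegral_meanExcess hr hνr) (.inr (ofReal_ne_top (r := B)))) (.inr ofNat_ne_top)
    (a := 2)
  rw [mul_zero, mul_zero] at hexcess
  refine tendsto_zero_of_forall_le_add (fun k => ?_) (fun k =>
    tendsto_inv_natCast_mul_add_ofReal_sqrt (D := ENNReal.ofReal B * (ENNReal.ofReal δ)⁻¹)
      (by finiteness) (2 * (2 * (2 * (B * k)) ^ 2) / η.real univ)) hexcess
  filter_upwards [eventually_ne_atTop 0] with n hn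
  refine iSup₂_le fun x hx => ((hP x hx).lintegral_enorm_weightedAverage_sub_le hr hη hη0 hν hνr hπ
    hf hB (natCast_ne_top k) hn).trans ?_
  rw [toReal_natCast]
  gcongr
  exact hK x hx

theorem skeleton_lln_general (hr : Measurable r)
    (hP : ∀ x ∈ K, IsChainLaw r κ x (P x)) (hη : ∀ x, η ≤ κ x) (hη0 : η ≠ 0)
    (hν : ∀ x, κ x ≤ ν) (hνr : ∫⁻ y, (ENNReal.ofReal (r y))⁻¹ ∂ν ≠ ∞) (hπ : κ.Invariant π)
    (hf : Measurable f) (hB : ∀ y, |f y| ≤ B) (hδ : 0 < δ) (hK : ∀ x ∈ K, δ ≤ r x)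
    {ε : ℝ} (hε : 0 < ε) :
    Tendsto (fun n => ⨆ x ∈ K, P x {ω | ε < |weightedAverage f n ω - ∫ y, f y / r y ∂π|})
      atTop (𝓝 0) := by
  have hε0 : ENNReal.ofReal ε ≠ 0 := (ofReal_pos.2 hε).ne'
  have hL1 := ENNReal.Tendsto.div_const (tendsto_iSup_lintegral_enorm_weightedAverage_sub hr hP hη
    hη0 hν hνr hπ hf hB hδ hK) (.inr hε0)
  rw [ENNReal.zero_div] at hL1
  refine tendsto_of_tendsto_of_tendsto_of_le_of_le tendsto_const_nhds hL1 (fun _ => zero_le)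
    fun n => iSup₂_le fun x hx => ?_
  calc P x {ω | ε < |weightedAverage f n ω - ∫ y, f y / r y ∂π|}
      ≤ P x {ω | ENNReal.ofReal ε ≤ ‖weightedAverage f n ω - ∫ y, f y / r y ∂π‖ₑ} :=
        measure_mono fun ω hω => by
          rw [mem_ofPred_eq, Real.enorm_eq_ofReal_abs]
          exact ofReal_le_ofReal (le_of_lt hω)
    _ ≤ (∫⁻ ω, ‖weightedAverage f n ω - ∫ y, f y / r y ∂π‖ₑ ∂P x) / ENNReal.ofReal ε :=
        meas_ge_le_lintegral_div
          ((measurable_weightedAverage hf n).sub_const _).enorm.aemeasurable hε0 ofReal_ne_top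
    _ ≤ _ := ENNReal.div_le_div_right (le_iSup₂ (f := fun x _ =>
        ∫⁻ ω, ‖weightedAverage f n ω - ∫ y, f y / r y ∂π‖ₑ ∂P x) x hx) _

end General

namespace ChainSetting

variable {X : Type*} [MeasurableSpace X] [TopologicalSpace X] (S : ChainSetting X)

instance : IsProbabilityMeasure S.lam := S.lam_prob

theorem exists_pos_forall_le_r {K : Set X} (hK : IsCompact K) (hK0 : K ⊆ S.E0ᶜ) :
    ∃ δ > 0, ∀ x ∈ K, δ ≤ S.r x :=
  hK.exists_forall_le' S.r_cont.continuousOn fun x hx => (S.r_nonneg x).lt_of_ne' (hK0 hx)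

theorem exists_minorant [CompactSpace X] : ∃ η : Measure X, η ≠ 0 ∧ ∀ x, η ≤ S.skel x := by
  obtain ⟨c, hc, hle⟩ := isCompact_univ.exists_forall_le' S.p_cont.continuousOn
    fun z _ => S.p_pos z.1 z.2
  refine ⟨ENNReal.ofReal c • S.lam, ?_, fun x => ?_⟩
  · rw [← Measure.measure_univ_ne_zero, Measure.smul_apply, measure_univ, smul_eq_mul, mul_one]
    exact (ofReal_pos.2 hc).ne'
  · rw [← withDensity_const]
    exact withDensity_mono (ae_of_all _ fun y => ofReal_le_ofReal (hle (x, y) trivial))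

theorem exists_majorant [CompactSpace X] :
    ∃ ν : Measure X, ∫⁻ y, (ENNReal.ofReal (S.r y))⁻¹ ∂ν ≠ ∞ ∧ ∀ x, S.skel x ≤ ν := by
  obtain ⟨C, hC⟩ := isCompact_univ.exists_bound_of_continuousOn S.p_cont.continuousOn
  refine ⟨ENNReal.ofReal C • S.lam, ?_, fun x => ?_⟩
  · rw [lintegral_smul_measure]
    exact mul_ne_top ofReal_ne_top S.inv_r_int
  · rw [← withDensity_const]
    exact withDensity_mono (ae_of_all _ fun y =>
      ofReal_le_ofReal ((le_abs_self _).trans (hC (x, y) trivial)))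

variable [OpensMeasurableSpace X] [SecondCountableTopology X]

/-- The transition probabilities `skel` of the skeleton, bundled as a kernel. -/
def skelKernel : Kernel X X where
  toFun := S.skel
  measurable' := by
    refine Measure.measurable_of_measurable_coe _ fun s hs => ?_
    simp only [skel, withDensity_apply _ hs]
    exact Measurable.lintegral_prod_right'
      (f := fun z : X × X => ENNReal.ofReal (S.p z.1 z.2)) S.p_cont.measurable.ennreal_ofReal

instance : IsMarkovKernel S.skelKernel where
  isProbabilityMeasure x := by
    have hint : Integrable (S.p x) S.lam :=
      not_imp_comm.1 integral_undef (by rw [S.p_int]; exact one_ne_zero)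
    refine ⟨(withDensity_apply _ .univ).trans ?_⟩
    rw [Measure.restrict_univ, ← ofReal_integral_eq_lintegral_ofReal hint
      (ae_of_all _ fun y => (S.p_pos x y).le), S.p_int, ofReal_one]

theorem invariant_skelKernel {π : Measure X}
    (hπ : ∀ s, MeasurableSet s → ∫⁻ x, S.skel x s ∂π = π s) : S.skelKernel.Invariant π :=
  Measure.ext fun s hs =>
    (Measure.bind_apply hs S.skelKernel.measurable.aemeasurable).trans (hπ s hs)

end ChainSetting

/-- **Proposition 3.1** (law of large numbers for the skeleton). For each `f ∈ C(E)` and each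
initial state `x ∈ E \ E₀`, the weighted average `(1/n) ∑_{i<n} f(Z_i) τ_i` converges in
probability to `π₀(f/r)`; the convergence is uniform over `x` in compact subsets of
`E \ E₀`. -/
theorem skeleton_lln (S : ChainSetting E)
    (P : E → Measure (Traj E)) (hP : ∀ x, IsChainLaw S.r S.skel x (P x))
    (π₀ : Measure E) (hπ₀ : IsProbabilityMeasure π₀)
    (hπ₀inv : ∀ s : Set E, MeasurableSet s → ∫⁻ x, S.skel x s ∂π₀ = π₀ s)
    (f : C(E, ℝ)) :
    (∀ x, x ∉ S.E0 → ∀ ε > (0 : ℝ),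
      Tendsto (fun n : ℕ =>
          P x {ω : Traj E | ε <
            |(1 / (n : ℝ)) * (∑ i ∈ Finset.range n, f (ω.1 i) * (ω.2 i).toReal)
              - ∫ y, f y / S.r y ∂π₀|})
        atTop (𝓝 (0 : ℝ≥0∞))) ∧
    (∀ K : Set E, IsCompact K → K ⊆ S.E0ᶜ → ∀ ε > (0 : ℝ),
      Tendsto (fun n : ℕ =>
          ⨆ x ∈ K, P x {ω : Traj E | ε <
            |(1 / (n : ℝ)) * (∑ i ∈ Finset.range n, f (ω.1 i) * (ω.2 i).toReal)
              - ∫ y, f y / S.r y ∂π₀|})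
        atTop (𝓝 (0 : ℝ≥0∞))) := by
  obtain ⟨η, hη0, hη⟩ := S.exists_minorant
  obtain ⟨ν, hνr, hν⟩ := S.exists_majorant
  have hlln (K : Set E) (hK : IsCompact K) (hK0 : K ⊆ S.E0ᶜ) (ε : ℝ) (hε : 0 < ε) :
      Tendsto (fun n => ⨆ x ∈ K, P x {ω | ε < |weightedAverage f n ω - ∫ y, f y / S.r y ∂π₀|})
        atTop (𝓝 0) := by
    obtain ⟨δ, hδ, hKδ⟩ := S.exists_pos_forall_le_r hK hK0
    exact skeleton_lln_general (κ := S.skelKernel) S.r_cont.measurable (fun x _ => hP x) hη hη0 hν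
      hνr (S.invariant_skelKernel hπ₀inv) f.continuous.measurable f.norm_coe_le_norm hδ hKδ hε
  refine ⟨fun x hx ε hε => ?_, hlln⟩
  simpa only [weightedAverage, mem_singleton_iff, iSup_iSup_eq_left] using
    hlln {x} isCompact_singleton (singleton_subset_iff.2 hx) ε hε

end
end

section
/- The set M₁ is I-dense in M₂: for every (μ,Q) ∈ M₂ with I(μ,Q) < +∞ there exists a sequence {(μ_n,Q_n)} ⊂ M₁ such that (μ_n,Q_n) → (μ,Q) and I(μ_n,Q_n) → I(μ,Q). -/
open MeasureTheory ProbabilityTheory Filter Topology Set ENNReal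

noncomputable section

/-- The convex function `Ψ(a) = a log a - (a - 1)` (with `Ψ(0) = 1`), extended to `ℝ≥0∞`. -/
def PsiE (a : ℝ≥0∞) : ℝ≥0∞ :=
  if a = ∞ then ∞ else ENNReal.ofReal (a.toReal * Real.log a.toReal - a.toReal + 1)

open Classical in
/-- The joint rate functional `I(μ,Q)` of (2.3):
`I(μ,Q) = ∫∫ μ(dx)c(x,dy) Ψ(dQ/(μ(dx)c(x,dy)))` if the two marginals of `Q` coincide and
`Q ≪ μ(dx)c(x,dy)`, and `+∞` otherwise. -/
def ChainSetting.rateI0 {E : Type*} [MeasurableSpace E] [TopologicalSpace E]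
    (S : ChainSetting E) (μ : Measure E) (Q : Measure (E × E)) : ℝ≥0∞ :=
  if Q.fst = Q.snd ∧ Q ≪ S.muc μ
  then ∫⁻ z, PsiE (Q.rnDeriv (S.muc μ) z) ∂(S.muc μ)
  else ∞

/-- The joint rate functional `I` on `M₁(E) × M₊(E×E)`. -/
def ChainSetting.rateI {E : Type*} [MeasurableSpace E] [TopologicalSpace E]
    (S : ChainSetting E) (q : ProbabilityMeasure E × FiniteMeasure (E × E)) : ℝ≥0∞ :=
  S.rateI0 (q.1 : Measure E) (q.2 : Measure (E × E))

/-- The (topological) support of a measure: points all of whose open neighbourhoods have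
positive measure. -/
def msupp {α : Type*} [TopologicalSpace α] {m : MeasurableSpace α} (μ : Measure α) : Set α :=
  {x | ∀ U : Set α, IsOpen U → x ∈ U → 0 < μ U}

/-- Membership in the set `M₁` of (5.7): with `K = supp μ ⊆ E \\ E₀` and `supp Q = K × K`,
there are disjoint open sets `D₁,…,D_ℓ ⊆ K` with `λ(K \\ ⋃ᵢ Dᵢ) = 0` such that
`dμ = ∑ᵢ aᵢ 1_{Dᵢ} dλ` with `aᵢ > 0` and `dQ = ∑_{ij} b_{ij} 1_{Dᵢ×Dⱼ} dλ×dλ` with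
`b_{ij} > 0`. -/
def ChainSetting.MemM1 {E : Type*} [MeasurableSpace E] [TopologicalSpace E]
    (S : ChainSetting E) (μ : Measure E) (Q : Measure (E × E)) : Prop :=
  msupp μ ⊆ S.E0ᶜ ∧ msupp Q = msupp μ ×ˢ msupp μ ∧
  ∃ (ℓ : ℕ) (D : Fin ℓ → Set E), (∀ i, IsOpen (D i)) ∧ (∀ i, D i ⊆ msupp μ) ∧
    Pairwise (Function.onFun Disjoint D) ∧ S.lam (msupp μ \ ⋃ i, D i) = 0 ∧
    (∃ a : Fin ℓ → ℝ, (∀ i, 0 < a i) ∧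
      μ = S.lam.withDensity fun x =>
        ∑ i, Set.indicator (D i) (fun _ => ENNReal.ofReal (a i)) x) ∧
    (∃ b : Fin ℓ → Fin ℓ → ℝ, (∀ i j, 0 < b i j) ∧
      Q = (S.lam.prod S.lam).withDensity fun z =>
        ∑ i, ∑ j, Set.indicator (D i ×ˢ D j) (fun _ => ENNReal.ofReal (b i j)) z)

/-- Membership in the set `M₂` of (5.8): `K = supp μ ⊆ E \\ E₀`, `supp Q = K × K`,
`μ ≪ λ` and `Q ≪ λ×λ`. -/
def ChainSetting.MemM2 {E : Type*} [MeasurableSpace E] [TopologicalSpace E]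
    (S : ChainSetting E) (μ : Measure E) (Q : Measure (E × E)) : Prop :=
  msupp μ ⊆ S.E0ᶜ ∧ msupp Q = msupp μ ×ˢ msupp μ ∧
  μ ≪ S.lam ∧ Q ≪ S.lam.prod S.lam

variable {E : Type*} [MeasurableSpace E] [TopologicalSpace E] [PolishSpace E]
  [CompactSpace E] [BorelSpace E] [Nonempty E]

/-!
When the marginals of `Q` agree, `I(μ, Q)` is the relative entropy of `Q` with respect to
`e^g · (μ ⊗ λ)`, where `g(x, y) = log (r(x) p(x, y))` is bounded and continuous on `F × E` for a
compact neighbourhood `F` of `supp μ` avoiding `E₀`.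

The approximation is by randomisation. Choose finitely many small disjoint open cells with null
boundaries that meet `supp μ` and cover almost all of it, and let `κ` replace a point of a cell by
a `λ`-random point of the same cell. Then `κμ` and `(κ ⊗ κ)Q` have densities constant on cells,
and `κλ = λ`, so that `(κ ⊗ κ)(μ ⊗ λ) = κμ ⊗ λ`. As the cells shrink, these measures converge weakly
to the original ones, and lower semicontinuity of the relative entropy gives the lower bound on the
limit of the rates. For the upper bound, the Donsker–Varadhan formula and Jensen's inequality give
the data processing inequality for `κ ⊗ κ` up to an error caused by the oscillation of `g` on the
cells, which vanishes in the limit. If the marginals of `Q` differ, then so do eventually those of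
`(κ ⊗ κ)Q`, and the rates are infinite.
-/

section DonskerVaradhan

open InformationTheory
open scoped BoundedContinuousFunction

variable {X : Type*} [MeasurableSpace X] {Q M : Measure X}

/-- The functional of the Donsker–Varadhan duality for finite measures of arbitrary mass: its
supremum over bounded continuous `f` is `klDiv Q M`. -/
def donskerVaradhan (Q M : Measure X) (f : X → ℝ) : ℝ :=
  ∫ x, f x ∂Q - ∫ x, (Real.exp (f x) - 1) ∂M

lemma mul_le_klFun_add_exp_sub_one {t : ℝ} (ht : 0 ≤ t) (y : ℝ) :
    t * y ≤ klFun t + (Real.exp y - 1) := by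
  rcases ht.eq_or_lt with rfl | ht
  · simpa [klFun] using (Real.exp_pos y).le
  · have h := Real.add_one_le_exp (y - Real.log t)
    rw [Real.exp_sub, Real.exp_log ht, le_div_iff₀ ht] at h
    rw [klFun]
    linarith

lemma integrable_of_abs_le [IsFiniteMeasure M] {f : X → ℝ} (hf : Measurable f) {C : ℝ}
    (hC : ∀ x, |f x| ≤ C) : Integrable f M :=
  .of_bound hf.aestronglyMeasurable C (ae_of_all _ hC)

lemma abs_exp_sub_one_le {y C : ℝ} (hy : |y| ≤ C) : |Real.exp y - 1| ≤ Real.exp C + 1 := by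
  refine (abs_sub _ _).trans ?_
  simpa using (abs_le.1 hy).2

lemma integrable_exp_of_abs_le [IsFiniteMeasure M] {f : X → ℝ} (hf : Measurable f) {C : ℝ}
    (hC : ∀ x, |f x| ≤ C) : Integrable (fun x => Real.exp (f x)) M :=
  integrable_of_abs_le (C := Real.exp C) hf.exp fun x => by
    simpa [abs_of_pos (Real.exp_pos _)] using (abs_le.1 (hC x)).2

lemma integrable_exp_sub_one_of_abs_le [IsFiniteMeasure M] {f : X → ℝ} (hf : Measurable f)
    {C : ℝ} (hC : ∀ x, |f x| ≤ C) : Integrable (fun x => Real.exp (f x) - 1) M :=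
  (integrable_exp_of_abs_le hf hC).sub (integrable_const 1)

lemma ofReal_integral_le_lintegral_ofReal (f : X → ℝ) :
    ENNReal.ofReal (∫ x, f x ∂M) ≤ ∫⁻ x, ENNReal.ofReal (f x) ∂M := by
  by_cases hf : Integrable f M
  · rw [integral_eq_lintegral_pos_part_sub_lintegral_neg_part hf]
    exact (ENNReal.ofReal_le_ofReal (sub_le_self _ toReal_nonneg)).trans ofReal_toReal_le
  · simp [integral_undef hf]

lemma donskerVaradhan_eq_integral [IsFiniteMeasure Q] [IsFiniteMeasure M] (hQM : Q ≪ M)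
    {f : X → ℝ} (hf : Measurable f) {C : ℝ} (hC : ∀ x, |f x| ≤ C) :
    Integrable (fun x => (Q.rnDeriv M x).toReal * f x - (Real.exp (f x) - 1)) M ∧
      donskerVaradhan Q M f =
        ∫ x, ((Q.rnDeriv M x).toReal * f x - (Real.exp (f x) - 1)) ∂M := by
  have hmul : Integrable (fun x => (Q.rnDeriv M x).toReal * f x) M := by
    simpa only [smul_eq_mul] using
      (integrable_rnDeriv_smul_iff hQM).2 (integrable_of_abs_le hf hC)
  have hexp : Integrable (fun x => Real.exp (f x) - 1) M :=
    integrable_exp_sub_one_of_abs_le hf hC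
  refine ⟨hmul.sub hexp, ?_⟩
  rw [donskerVaradhan, integral_sub hmul hexp, ← integral_rnDeriv_smul hQM]
  simp only [smul_eq_mul]

lemma ofReal_donskerVaradhan_le_klDiv [IsFiniteMeasure Q] [IsFiniteMeasure M]
    {f : X → ℝ} (hf : Measurable f) {C : ℝ} (hC : ∀ x, |f x| ≤ C) :
    ENNReal.ofReal (donskerVaradhan Q M f) ≤ klDiv Q M := by
  by_cases hQM : Q ≪ M
  · rw [(donskerVaradhan_eq_integral hQM hf hC).2, klDiv_eq_lintegral_klFun_of_ac hQM]
    refine (ofReal_integral_le_lintegral_ofReal _).trans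
      (lintegral_mono fun x => ENNReal.ofReal_le_ofReal ?_)
    linarith [mul_le_klFun_add_exp_sub_one (Q.rnDeriv M x).toReal_nonneg (f x)]
  · simp [klDiv_of_not_ac hQM]

/-- The truncation of `t` to `[1 / (n + 1), n + 1]`. It makes the logarithm of a density bounded,
hence an admissible test function in the Donsker–Varadhan duality. -/
def clamp (n : ℕ) (t : ℝ) : ℝ := max (n + 1 : ℝ)⁻¹ (min t (n + 1))

lemma inv_le_clamp (n : ℕ) (t : ℝ) : (n + 1 : ℝ)⁻¹ ≤ clamp n t := le_max_left _ _

lemma clamp_pos (n : ℕ) (t : ℝ) : 0 < clamp n t :=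
  (by positivity : (0 : ℝ) < (n + 1 : ℝ)⁻¹).trans_le (inv_le_clamp n t)

lemma clamp_le (n : ℕ) (t : ℝ) : clamp n t ≤ n + 1 :=
  max_le ((inv_le_one_of_one_le₀ (by simp)).trans (by simp)) (min_le_right _ _)

lemma measurable_clamp (n : ℕ) : Measurable (clamp n) := by
  unfold clamp
  fun_prop

lemma abs_log_clamp_le (n : ℕ) (t : ℝ) : |Real.log (clamp n t)| ≤ Real.log (n + 1) := by
  rw [abs_le, ← Real.log_inv]
  exact ⟨Real.log_le_log (by positivity) (inv_le_clamp n t),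
    Real.log_le_log (clamp_pos n t) (clamp_le n t)⟩

lemma tendsto_clamp {t : ℝ} (ht : 0 ≤ t) : Tendsto (fun n => clamp n t) atTop (𝓝 t) := by
  have hinv : Tendsto (fun n : ℕ => (n + 1 : ℝ)⁻¹) atTop (𝓝 0) := by
    simpa only [one_div] using tendsto_one_div_add_atTop_nhds_zero_nat (𝕜 := ℝ)
  have hmin : Tendsto (fun n : ℕ => min t (n + 1 : ℝ)) atTop (𝓝 t) := by
    refine tendsto_const_nhds.congr' ?_
    filter_upwards [eventually_ge_atTop ⌈t⌉₊] with n hn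
    exact (min_eq_left ((Nat.le_ceil t).trans (by exact_mod_cast hn.trans n.le_succ))).symm
  simpa only [max_eq_right ht] using! hinv.max hmin

lemma klFun_clamp_le (n : ℕ) (t : ℝ) :
    klFun (clamp n t) ≤ t * Real.log (clamp n t) - (clamp n t - 1) := by
  suffices 0 ≤ (t - clamp n t) * Real.log (clamp n t) by
    rw [klFun]
    linarith
  have hinv : (n + 1 : ℝ)⁻¹ ≤ 1 := inv_le_one_of_one_le₀ (by simp)
  rcases le_or_gt t 1 with h | h
  · have hmin : min t (n + 1 : ℝ) = t := min_eq_left (h.trans (by simp))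
    refine mul_nonneg_of_nonpos_of_nonpos (sub_nonpos.2 ?_)
      (Real.log_nonpos (clamp_pos n t).le ?_)
    · exact hmin.ge.trans (le_max_right _ _)
    · exact max_le hinv (hmin.le.trans h)
  · have hmin : 1 ≤ min t (n + 1 : ℝ) := le_min h.le (by simp)
    have hmax : clamp n t = min t (n + 1 : ℝ) := max_eq_right (hinv.trans hmin)
    exact mul_nonneg (sub_nonneg.2 (hmax.le.trans (min_le_left _ _)))
      (Real.log_nonneg (hmin.trans hmax.ge))

lemma tendsto_mul_log_clamp {t : ℝ} (ht : 0 ≤ t) :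
    Tendsto (fun n => t * Real.log (clamp n t) - (clamp n t - 1)) atTop (𝓝 (klFun t)) := by
  have hlog : Tendsto (fun n => t * Real.log (clamp n t)) atTop (𝓝 (t * Real.log t)) := by
    rcases ht.eq_or_lt with rfl | hpos
    · simp
    · exact ((tendsto_clamp ht).log hpos.ne').const_mul t
  convert hlog.sub ((tendsto_clamp ht).sub_const 1) using 2
  rw [klFun]
  ring

lemma klDiv_le_of_absolutelyContinuous [IsFiniteMeasure Q] [IsFiniteMeasure M]
    (hQM : Q ≪ M) {b : ℝ≥0∞}
    (h : ∀ f : X → ℝ, Measurable f → ∀ C, (∀ x, |f x| ≤ C) →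
      ENNReal.ofReal (donskerVaradhan Q M f) ≤ b) : klDiv Q M ≤ b := by
  set g : X → ℝ := fun x => (Q.rnDeriv M x).toReal
  have hg_meas : Measurable g := (Q.measurable_rnDeriv M).ennreal_toReal
  have hlog_meas (n : ℕ) : Measurable fun x => Real.log (clamp n (g x)) :=
    ((measurable_clamp n).comp hg_meas).log
  set u : ℕ → X → ℝ := fun n x => g x * Real.log (clamp n (g x)) - (clamp n (g x) - 1)
  have hu_le (n : ℕ) : ∫⁻ x, ENNReal.ofReal (u n x) ∂M ≤ b := by
    obtain ⟨hint, heq⟩ := donskerVaradhan_eq_integral hQM (hlog_meas n)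
      fun x => abs_log_clamp_le n (g x)
    simp only [Real.exp_log (clamp_pos n _)] at hint heq
    rw [← ofReal_integral_eq_lintegral_ofReal hint, ← heq]
    · exact h _ (hlog_meas n) _ fun x => abs_log_clamp_le n (g x)
    · exact ae_of_all _ fun x => (klFun_nonneg (clamp_pos n _).le).trans (klFun_clamp_le n _)
  calc klDiv Q M = ∫⁻ x, ENNReal.ofReal (klFun (g x)) ∂M := klDiv_eq_lintegral_klFun_of_ac hQM
    _ = ∫⁻ x, liminf (fun n => ENNReal.ofReal (u n x)) atTop ∂M := by
        refine lintegral_congr fun x => (Tendsto.liminf_eq ?_).symm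
        exact ENNReal.tendsto_ofReal (tendsto_mul_log_clamp ENNReal.toReal_nonneg)
    _ ≤ liminf (fun n => ∫⁻ x, ENNReal.ofReal (u n x) ∂M) atTop :=
        lintegral_liminf_le fun n => ((hg_meas.mul (hlog_meas n)).sub
          (((measurable_clamp n).comp hg_meas).sub_const 1)).ennreal_ofReal
    _ ≤ b := liminf_le_of_le (by isBoundedDefault) fun a ha =>
        ha.exists.elim fun n hn => hn.trans (hu_le n)

lemma absolutelyContinuous_of_forall_donskerVaradhan_le [IsFiniteMeasure Q] {b : ℝ≥0∞}
    (hb : b ≠ ∞)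
    (h : ∀ f : X → ℝ, Measurable f → ∀ C, (∀ x, |f x| ≤ C) →
      ENNReal.ofReal (donskerVaradhan Q M f) ≤ b) : Q ≪ M := by
  refine Measure.AbsolutelyContinuous.mk fun A hA hMA => ?_
  by_contra hQA
  have hQA_pos : 0 < Q.real A := ENNReal.toReal_pos hQA (measure_ne_top Q A)
  set t : ℝ := (b.toReal + 1) / Q.real A
  have hbound : ∀ x, |A.indicator (fun _ => t) x| ≤ |t| := fun x => by
    by_cases hx : x ∈ A <;> simp [hx]
  have hDV : donskerVaradhan Q M (A.indicator fun _ => t) = b.toReal + 1 := by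
    have hM : ∫ x, (Real.exp (A.indicator (fun _ => t) x) - 1) ∂M = 0 := by
      refine integral_eq_zero_of_ae ?_
      filter_upwards [measure_eq_zero_iff_ae_notMem.1 hMA] with x hx
      simp [hx]
    rw [donskerVaradhan, hM, sub_zero, integral_indicator_const t hA, smul_eq_mul,
      mul_div_cancel₀ _ hQA_pos.ne']
  have := h _ (measurable_const.indicator hA) _ hbound
  rw [hDV, ENNReal.ofReal_le_iff_le_toReal hb] at this
  linarith

lemma klDiv_le_iff_forall_donskerVaradhan_le [IsFiniteMeasure Q] [IsFiniteMeasure M] {b : ℝ≥0∞} :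
    klDiv Q M ≤ b ↔ ∀ f : X → ℝ, Measurable f → ∀ C, (∀ x, |f x| ≤ C) →
      ENNReal.ofReal (donskerVaradhan Q M f) ≤ b := by
  refine ⟨fun h f hf C hC => (ofReal_donskerVaradhan_le_klDiv hf hC).trans h, fun h => ?_⟩
  rcases eq_or_ne b ∞ with rfl | hb
  · exact le_top
  · exact klDiv_le_of_absolutelyContinuous
      (absolutelyContinuous_of_forall_donskerVaradhan_le hb h) h

variable [TopologicalSpace X] [BorelSpace X]

lemma tendsto_donskerVaradhan [IsFiniteMeasure Q] [IsFiniteMeasure M] {f : X → ℝ} {C : ℝ}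
    {g : ℕ → X →ᵇ ℝ} (hgC : ∀ n x, |g n x| ≤ C)
    (hg : ∀ᵐ x ∂(Q + M), Tendsto (fun n => g n x) atTop (𝓝 (f x))) :
    Tendsto (fun n => donskerVaradhan Q M (g n)) atTop (𝓝 (donskerVaradhan Q M f)) := by
  rw [ae_add_measure_iff] at hg
  refine .sub ?_ ?_
  · exact tendsto_integral_of_dominated_convergence (fun _ => C)
      (fun n => (g n).continuous.aestronglyMeasurable) (integrable_const C)
      (fun n => ae_of_all _ (hgC n)) hg.1
  · refine tendsto_integral_of_dominated_convergence (fun _ => Real.exp C + 1)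
      (fun n => by fun_prop) (integrable_const _)
      (fun n => ae_of_all _ fun x => abs_exp_sub_one_le (hgC n x)) ?_
    filter_upwards [hg.2] with x hx using ((Real.continuous_exp.tendsto _).comp hx).sub_const 1

lemma continuous_donskerVaradhan (f : X →ᵇ ℝ) :
    Continuous fun ρ : FiniteMeasure X × FiniteMeasure X =>
      donskerVaradhan (ρ.1 : Measure X) (ρ.2 : Measure X) f := by
  have hexp : ∀ x, ‖Real.exp (f x) - 1‖ ≤ Real.exp ‖f‖ + 1 := fun x =>
    abs_exp_sub_one_le (f.norm_coe_le_norm x)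
  exact ((FiniteMeasure.continuous_integral_boundedContinuousFunction f).comp continuous_fst).sub
    ((FiniteMeasure.continuous_integral_boundedContinuousFunction
      (.ofNormedAddCommGroup _ (by fun_prop) _ hexp)).comp continuous_snd)

variable [TopologicalSpace.PseudoMetrizableSpace X]

lemma exists_seq_boundedContinuousFunction_tendsto_ae (ν : Measure X) [IsFiniteMeasure ν]
    {f : X → ℝ} (hf : Measurable f) {C : ℝ} (hC : ∀ x, |f x| ≤ C) :
    ∃ g : ℕ → X →ᵇ ℝ, (∀ n x, |g n x| ≤ C) ∧
      ∀ᵐ x ∂ν, Tendsto (fun n => g n x) atTop (𝓝 (f x)) := by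
  have hf_mem : MemLp f 1 ν := memLp_one_iff_integrable.2 (integrable_of_abs_le hf hC)
  choose u hu hu_mem using fun n : ℕ => hf_mem.exists_boundedContinuous_eLpNorm_sub_le
    one_ne_top (ε := (n + 1 : ℝ≥0∞)⁻¹) (by simp)
  have hlim : Tendsto (fun n => eLpNorm (⇑(u n) - f) 1 ν) atTop (𝓝 0) := by
    refine tendsto_of_tendsto_of_tendsto_of_le_of_le tendsto_const_nhds
      ENNReal.tendsto_inv_nat_nhds_zero (fun _ => zero_le) fun n => ?_
    rw [eLpNorm_sub_comm]
    exact (hu n).trans (ENNReal.inv_le_inv.2 le_self_add)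
  obtain ⟨φ, -, hφ⟩ := (tendstoInMeasure_of_tendsto_eLpNorm one_ne_zero
    (fun n => (hu_mem n).1) hf_mem.1 hlim).exists_seq_tendsto_ae
  have hclip (y : ℝ) (hy : |y| ≤ C) : max (-C) (min C y) = y := by
    rw [min_eq_right (abs_le.1 hy).2, max_eq_right (abs_le.1 hy).1]
  have hclip_le (y : ℝ) (hC0 : 0 ≤ C) : |max (-C) (min C y)| ≤ C :=
    abs_le.2 ⟨le_max_left _ _, max_le (by linarith) (min_le_left _ _)⟩
  have hC_nonneg (x : X) : 0 ≤ C := (abs_nonneg _).trans (hC x)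
  refine ⟨fun n => .ofNormedAddCommGroup (fun x => max (-C) (min C (u (φ n) x)))
    (by fun_prop) C fun x => hclip_le _ (hC_nonneg x), fun n x => hclip_le _ (hC_nonneg x), ?_⟩
  · filter_upwards [hφ] with x hx
    rw [← hclip _ (hC x)]
    exact tendsto_const_nhds.max (tendsto_const_nhds.min hx)

lemma klDiv_eq_iSup_donskerVaradhan [IsFiniteMeasure Q] [IsFiniteMeasure M] :
    klDiv Q M = ⨆ f : X →ᵇ ℝ, ENNReal.ofReal (donskerVaradhan Q M f) := by
  refine le_antisymm (klDiv_le_iff_forall_donskerVaradhan_le.2 fun f hf C hC => ?_)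
    (iSup_le fun f => ofReal_donskerVaradhan_le_klDiv f.continuous.measurable f.norm_coe_le_norm)
  obtain ⟨g, hgC, hg⟩ := exists_seq_boundedContinuousFunction_tendsto_ae (Q + M) hf hC
  exact le_of_tendsto' (ENNReal.tendsto_ofReal (tendsto_donskerVaradhan hgC hg))
    fun n => le_iSup (fun f : X →ᵇ ℝ => ENNReal.ofReal (donskerVaradhan Q M f)) (g n)

variable (X) in
lemma lowerSemicontinuous_klDiv :
    LowerSemicontinuous fun ρ : FiniteMeasure X × FiniteMeasure X =>
      klDiv (ρ.1 : Measure X) (ρ.2 : Measure X) := by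
  simp only [klDiv_eq_iSup_donskerVaradhan]
  exact lowerSemicontinuous_iSup fun f =>
    (ENNReal.continuous_ofReal.comp (continuous_donskerVaradhan f)).lowerSemicontinuous

end DonskerVaradhan

section ExpTilt

open InformationTheory

variable {X Y : Type*} [MeasurableSpace X] [MeasurableSpace Y] {Q W : Measure X}

/-- The measure with density `exp g` with respect to `W`; in contrast to `Measure.tilted` it is not
normalised. -/
def expTilt (W : Measure X) (g : X → ℝ) : Measure X :=
  W.withDensity fun x => ENNReal.ofReal (Real.exp (g x))

lemma isFiniteMeasure_expTilt [IsFiniteMeasure W] {g : X → ℝ} (hg : Measurable g) {C : ℝ}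
    (hC : ∀ x, |g x| ≤ C) : IsFiniteMeasure (expTilt W g) :=
  isFiniteMeasure_withDensity_ofReal (integrable_exp_of_abs_le hg hC).2

lemma integral_expTilt {g : X → ℝ} (hg : Measurable g) (f : X → ℝ) :
    ∫ x, f x ∂(expTilt W g) = ∫ x, Real.exp (g x) * f x ∂W := by
  rw [expTilt, integral_withDensity_eq_integral_toReal_smul (by fun_prop) (by simp)]
  simp only [ENNReal.toReal_ofReal (Real.exp_pos _).le, smul_eq_mul]

lemma donskerVaradhan_expTilt [IsFiniteMeasure Q] [IsFiniteMeasure W] {f g : X → ℝ}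
    (hf : Measurable f) (hg : Measurable g) {C D : ℝ} (hC : ∀ x, |f x| ≤ C)
    (hD : ∀ x, |g x| ≤ D) :
    donskerVaradhan Q (expTilt W g) f =
      donskerVaradhan Q W (fun x => f x + g x) - donskerVaradhan Q W g := by
  have hfg : ∀ x, |f x + g x| ≤ C + D := fun x =>
    (abs_add_le _ _).trans (add_le_add (hC x) (hD x))
  have hint_g : Integrable (fun x => Real.exp (g x) - 1) W :=
    integrable_exp_sub_one_of_abs_le hg hD
  have hint_fg : Integrable (fun x => Real.exp (f x + g x) - 1) W :=
    integrable_exp_sub_one_of_abs_le (hf.add hg) hfg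
  have hW : ∫ x, Real.exp (g x) * (Real.exp (f x) - 1) ∂W =
      ∫ x, (Real.exp (f x + g x) - 1) ∂W - ∫ x, (Real.exp (g x) - 1) ∂W := by
    rw [← integral_sub hint_fg hint_g]
    refine integral_congr_ae (ae_of_all _ fun x => ?_)
    simp only [Real.exp_add]
    ring
  simp only [donskerVaradhan]
  rw [integral_expTilt hg, hW,
    integral_add (integrable_of_abs_le hf hC) (integrable_of_abs_le hg hD)]
  ring

lemma integral_comp_measure {κ : Kernel X Y} {f : Y → ℝ} (hf : Integrable f (κ ∘ₘ W)) :
    ∫ y, f y ∂(κ ∘ₘ W) = ∫ x, ∫ y, f y ∂κ x ∂W := by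
  rw [Measure.comp_eq_comp_const_apply] at hf ⊢
  rw [Kernel.integral_comp hf, Kernel.const_apply]

lemma measurable_integral_kernel {κ : Kernel X Y} {h : Y → ℝ} (hh : Measurable h) :
    Measurable fun x => ∫ y, h y ∂κ x :=
  hh.stronglyMeasurable.integral_kernel.measurable

variable {κ : Kernel X Y} [IsMarkovKernel κ]

lemma abs_integral_kernel_le {h : Y → ℝ} {C : ℝ} (hC : ∀ y, |h y| ≤ C) (x : X) :
    |∫ y, h y ∂κ x| ≤ C := by
  simpa using norm_integral_le_of_norm_le_const (μ := κ x) (f := h) (ae_of_all _ hC)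

lemma donskerVaradhan_comp_le [IsFiniteMeasure Q] [IsFiniteMeasure W] {h : Y → ℝ}
    (hh : Measurable h) {C : ℝ} (hC : ∀ y, |h y| ≤ C) :
    donskerVaradhan (κ ∘ₘ Q) (κ ∘ₘ W) h ≤ donskerVaradhan Q W fun x => ∫ y, h y ∂κ x := by
  have hexp : Integrable (fun y => Real.exp (h y) - 1) (κ ∘ₘ W) :=
    integrable_exp_sub_one_of_abs_le hh hC
  have hJensen : ∀ x, Real.exp (∫ y, h y ∂κ x) - 1 ≤ ∫ y, (Real.exp (h y) - 1) ∂κ x := by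
    intro x
    rw [integral_sub (integrable_exp_of_abs_le hh hC) (integrable_const 1)]
    simpa using convexOn_exp.map_integral_le Real.continuous_exp.continuousOn isClosed_univ
      (by simp) (integrable_of_abs_le hh hC) (integrable_exp_of_abs_le hh hC)
  have hexp' : Integrable (fun x => Real.exp (∫ y, h y ∂κ x) - 1) W :=
    integrable_exp_sub_one_of_abs_le (measurable_integral_kernel hh) (abs_integral_kernel_le hC)
  have hexp_kernel : Integrable (fun x => ∫ y, (Real.exp (h y) - 1) ∂κ x) W :=
    integrable_of_abs_le (measurable_integral_kernel (hh.exp.sub_const 1))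
      (abs_integral_kernel_le fun y => abs_exp_sub_one_le (hC y))
  simp only [donskerVaradhan]
  rw [integral_comp_measure (integrable_of_abs_le hh hC), integral_comp_measure hexp]
  exact sub_le_sub_left (integral_mono hexp' hexp_kernel hJensen) _

lemma klDiv_comp_expTilt_le [IsFiniteMeasure Q] [IsFiniteMeasure W] {g : X → ℝ} {g' : Y → ℝ}
    (hg : Measurable g) (hg' : Measurable g') {C C' : ℝ} (hC : ∀ x, |g x| ≤ C)
    (hC' : ∀ y, |g' y| ≤ C') :
    klDiv (κ ∘ₘ Q) (expTilt (κ ∘ₘ W) g') ≤ klDiv Q (expTilt W g) +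
      ENNReal.ofReal (donskerVaradhan Q W g - donskerVaradhan (κ ∘ₘ Q) (κ ∘ₘ W) g') := by
  have := isFiniteMeasure_expTilt (W := W) hg hC
  have := isFiniteMeasure_expTilt (W := κ ∘ₘ W) hg' hC'
  refine klDiv_le_iff_forall_donskerVaradhan_le.2 fun f hf B hB => ?_
  have hfg : ∀ y, |f y + g' y| ≤ B + C' := fun y =>
    (abs_add_le _ _).trans (add_le_add (hB y) (hC' y))
  set h : X → ℝ := fun x => ∫ y, (f y + g' y) ∂κ x - g x
  have hh_meas : Measurable h := (measurable_integral_kernel (hf.add hg')).sub hg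
  have hh_le : ∀ x, |h x| ≤ B + C' + C := fun x =>
    (abs_sub _ _).trans (add_le_add (abs_integral_kernel_le hfg x) (hC x))
  have hdual : donskerVaradhan Q (expTilt W g) h =
      donskerVaradhan Q W (fun x => ∫ y, (f y + g' y) ∂κ x) - donskerVaradhan Q W g := by
    rw [donskerVaradhan_expTilt hh_meas hg hh_le hC]
    simp only [h, sub_add_cancel]
  calc ENNReal.ofReal (donskerVaradhan (κ ∘ₘ Q) (expTilt (κ ∘ₘ W) g') f)
      ≤ ENNReal.ofReal (donskerVaradhan Q (expTilt W g) h +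
          (donskerVaradhan Q W g - donskerVaradhan (κ ∘ₘ Q) (κ ∘ₘ W) g')) := by
        refine ENNReal.ofReal_le_ofReal ?_
        rw [donskerVaradhan_expTilt hf hg' hB hC', hdual]
        have hJensen : donskerVaradhan (κ ∘ₘ Q) (κ ∘ₘ W) (fun y => f y + g' y) ≤
            donskerVaradhan Q W fun x => ∫ y, (f y + g' y) ∂κ x :=
          donskerVaradhan_comp_le (hf.add hg') hfg
        linarith
    _ ≤ _ := ENNReal.ofReal_add_le.trans
        (add_le_add_left (ofReal_donskerVaradhan_le_klDiv hh_meas hh_le) _)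

end ExpTilt

lemma coe_toPM {X : Type*} [MeasurableSpace X] [Nonempty X] (μ : Measure X)
    [hμ : IsProbabilityMeasure μ] : (toPM μ : Measure X) = μ := by
  simp [toPM, hμ]

lemma coe_toFM {X : Type*} [MeasurableSpace X] (μ : Measure X) [hμ : IsFiniteMeasure μ] :
    (toFM μ : Measure X) = μ := by
  simp [toFM, hμ]

section ConcentratesAtId

open InformationTheory
open scoped BoundedContinuousFunction

variable {X : Type*} [TopologicalSpace X] [MeasurableSpace X]

/-- The kernels `κ n` converge to the identity kernel: every neighbourhood of `x` eventually
carries `κ n x`. -/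
def ConcentratesAtId (κ : ℕ → Kernel X X) : Prop :=
  ∀ x, ∀ U ∈ 𝓝 x, ∀ᶠ n in atTop, ∀ᵐ y ∂κ n x, y ∈ U

variable {κ : ℕ → Kernel X X} [∀ n, IsMarkovKernel (κ n)]

lemma ConcentratesAtId.parallelComp (hκ : ConcentratesAtId κ) :
    ConcentratesAtId fun n => κ n ∥ₖ κ n := by
  rintro ⟨x, y⟩ U hU
  obtain ⟨V, hV, W, hW, hVW⟩ := mem_nhds_prod_iff.1 hU
  filter_upwards [hκ x V hV, hκ y W hW] with n hn_fst hn_snd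
  rw [Kernel.parallelComp_apply]
  filter_upwards [Measure.quasiMeasurePreserving_fst.ae hn_fst,
    Measure.quasiMeasurePreserving_snd.ae hn_snd] with z hz_fst hz_snd using hVW ⟨hz_fst, hz_snd⟩

variable [OpensMeasurableSpace X]

lemma ConcentratesAtId.tendsto_integral (hκ : ConcentratesAtId κ) (f : X →ᵇ ℝ) (x : X) :
    Tendsto (fun n => ∫ y, f y ∂κ n x) atTop (𝓝 (f x)) := by
  refine Metric.tendsto_nhds.2 fun ε hε => ?_
  have hnear : ∀ᶠ y in 𝓝 x, dist (f y) (f x) < ε / 2 :=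
    Metric.tendsto_nhds.1 (f.continuous.tendsto x) _ (half_pos hε)
  filter_upwards [hκ x _ hnear] with n hn
  have hsub : ∫ y, f y ∂κ n x - f x = ∫ y, (f y - f x) ∂κ n x := by
    rw [integral_sub (f.integrable _) (integrable_const _)]
    simp
  rw [Real.dist_eq, hsub]
  have hle : ∀ᵐ y ∂κ n x, ‖f y - f x‖ ≤ ε / 2 := hn.mono fun y hy => (dist_eq_norm (f y) _ ▸ hy).le
  calc |∫ y, (f y - f x) ∂κ n x| ≤ ε / 2 * (κ n x).real univ :=
        norm_integral_le_of_norm_le_const hle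
    _ < ε := by simpa using hε

lemma ConcentratesAtId.tendsto_integral_comp (hκ : ConcentratesAtId κ) (μ : Measure X)
    [IsFiniteMeasure μ] (f : X →ᵇ ℝ) :
    Tendsto (fun n => ∫ x, f x ∂(κ n ∘ₘ μ)) atTop (𝓝 (∫ x, f x ∂μ)) := by
  simp only [integral_comp_measure (f.integrable _)]
  exact tendsto_integral_of_dominated_convergence (fun _ => ‖f‖)
    (fun n => (measurable_integral_kernel f.continuous.measurable).aestronglyMeasurable)
    (integrable_const _) (fun n => ae_of_all _ (abs_integral_kernel_le f.norm_coe_le_norm))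
    (ae_of_all _ (hκ.tendsto_integral f))

lemma ConcentratesAtId.tendsto_toFM_comp (hκ : ConcentratesAtId κ) (μ : Measure X)
    [IsFiniteMeasure μ] : Tendsto (fun n => toFM (κ n ∘ₘ μ)) atTop (𝓝 (toFM μ)) := by
  refine FiniteMeasure.tendsto_iff_forall_integral_tendsto.2 fun f => ?_
  simpa only [coe_toFM] using hκ.tendsto_integral_comp μ f

lemma ConcentratesAtId.tendsto_toPM_comp [Nonempty X] (hκ : ConcentratesAtId κ) (μ : Measure X)
    [IsProbabilityMeasure μ] : Tendsto (fun n => toPM (κ n ∘ₘ μ)) atTop (𝓝 (toPM μ)) := by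
  refine ProbabilityMeasure.tendsto_iff_forall_integral_tendsto.2 fun f => ?_
  simpa only [coe_toPM] using hκ.tendsto_integral_comp μ f

instance isFiniteMeasure_expTilt_boundedContinuousFunction (μ : Measure X) [IsFiniteMeasure μ]
    (g : X →ᵇ ℝ) : IsFiniteMeasure (expTilt μ g) :=
  isFiniteMeasure_expTilt g.continuous.measurable g.norm_coe_le_norm

lemma tendsto_toFM_expTilt {μ : Measure X} [IsFiniteMeasure μ] {μs : ℕ → Measure X}
    [∀ n, IsFiniteMeasure (μs n)]
    (h : Tendsto (fun n => toFM (μs n)) atTop (𝓝 (toFM μ))) (g : X →ᵇ ℝ) :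
    Tendsto (fun n => toFM (expTilt (μs n) g)) atTop (𝓝 (toFM (expTilt μ g))) := by
  rw [FiniteMeasure.tendsto_iff_forall_integral_tendsto] at h ⊢
  intro f
  have hbound : ∀ x, ‖Real.exp (g x) * f x‖ ≤ Real.exp ‖g‖ * ‖f‖ := fun x => by
    rw [norm_mul, Real.norm_of_nonneg (Real.exp_pos _).le]
    exact mul_le_mul (Real.exp_le_exp.2 (abs_le.1 (g.norm_coe_le_norm x)).2)
      (f.norm_coe_le_norm x) (norm_nonneg _) (Real.exp_pos _).le
  simpa only [coe_toFM, integral_expTilt g.continuous.measurable] using!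
    h (.ofNormedAddCommGroup _ (by fun_prop) _ hbound)

lemma ConcentratesAtId.tendsto_klDiv_comp_expTilt [BorelSpace X]
    [TopologicalSpace.PseudoMetrizableSpace X] (hκ : ConcentratesAtId κ) (Q W : Measure X)
    [IsFiniteMeasure Q] [IsFiniteMeasure W] (g : X →ᵇ ℝ) :
    Tendsto (fun n => klDiv (κ n ∘ₘ Q) (expTilt (κ n ∘ₘ W) g)) atTop
      (𝓝 (klDiv Q (expTilt W g))) := by
  have hQ := hκ.tendsto_toFM_comp Q
  have hW := hκ.tendsto_toFM_comp W
  have hdefect : Tendsto (fun n => klDiv Q (expTilt W g) + ENNReal.ofReal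
      (donskerVaradhan Q W g - donskerVaradhan (κ n ∘ₘ Q) (κ n ∘ₘ W) g)) atTop
      (𝓝 (klDiv Q (expTilt W g))) := by
    have hDV := ((continuous_donskerVaradhan g).tendsto _).comp (hQ.prodMk_nhds hW)
    simp only [coe_toFM, Function.comp_def] at hDV
    simpa using (ENNReal.tendsto_ofReal (hDV.const_sub (donskerVaradhan Q W g))).const_add
      (klDiv Q (expTilt W g))
  refine tendsto_order.2 ⟨fun a ha => ?_, fun b hb => ?_⟩
  · have hlsc := lowerSemicontinuous_klDiv X (toFM Q, toFM (expTilt W g)) a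
      (by simpa only [coe_toFM] using ha)
    simpa only [coe_toFM] using (hQ.prodMk_nhds (tendsto_toFM_expTilt hW g)).eventually hlsc
  · filter_upwards [(tendsto_order.1 hdefect).2 b hb] with n hn
    exact (klDiv_comp_expTilt_le g.continuous.measurable g.continuous.measurable
      g.norm_coe_le_norm g.norm_coe_le_norm).trans_lt hn

end ConcentratesAtId

section ParallelComp

variable {X Y : Type*} [MeasurableSpace X] [MeasurableSpace Y] {X' Y' : Type*}
  [MeasurableSpace X'] [MeasurableSpace Y']

lemma parallelComp_comp_measure_prod (κ : Kernel X X') [IsSFiniteKernel κ] (η : Kernel Y Y')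
    [IsSFiniteKernel η] (μ : Measure X) [SFinite μ] (ν : Measure Y) [SFinite ν] :
    (κ ∥ₖ η) ∘ₘ (μ.prod ν) = (κ ∘ₘ μ).prod (η ∘ₘ ν) := by
  have h := congrArg (fun ξ => ξ ())
    (Kernel.parallelComp_comp_prod (κ := Kernel.const Unit μ) (η := κ)
      (κ' := Kernel.const Unit ν) (η' := η))
  simpa only [Kernel.prod_const, Kernel.comp_const, Kernel.const_apply] using h

variable (κ : Kernel X X') [IsMarkovKernel κ] (η : Kernel Y Y') [IsMarkovKernel η]
  (Q : Measure (X × Y))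

lemma fst_parallelComp_comp : ((κ ∥ₖ η) ∘ₘ Q).fst = κ ∘ₘ Q.fst := by
  ext s hs
  rw [Measure.fst_apply hs, Measure.bind_apply (measurable_fst hs) (by fun_prop),
    Measure.bind_apply hs (by fun_prop), Measure.fst,
    lintegral_map (κ.measurable_coe hs) measurable_fst]
  simp [← prod_univ, Kernel.parallelComp_apply_prod]

lemma snd_parallelComp_comp : ((κ ∥ₖ η) ∘ₘ Q).snd = η ∘ₘ Q.snd := by
  ext s hs
  rw [Measure.snd_apply hs, Measure.bind_apply (measurable_snd hs) (by fun_prop),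
    Measure.bind_apply hs (by fun_prop), Measure.snd,
    lintegral_map (η.measurable_coe hs) measurable_snd]
  simp [← univ_prod, Kernel.parallelComp_apply_prod]

end ParallelComp

section CellKernel

variable {X Y : Type*} [MeasurableSpace X] [MeasurableSpace Y] {ι : Type*} [Fintype ι]

lemma comp_eq_sum_of_forall_mem {η : Kernel X Y} {P : ι → Set X} {m : ι → Measure Y}
    (hP : ∀ i, MeasurableSet (P i)) (hdisj : Pairwise (Function.onFun Disjoint P))
    (hη : ∀ i, ∀ x ∈ P i, η x = m i) {μ : Measure X} (hμ : ∀ᵐ x ∂μ, x ∈ ⋃ i, P i) :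
    η ∘ₘ μ = ∑ i, μ (P i) • m i := by
  have hcell (i : ι) : η ∘ₘ (μ.restrict (P i)) = μ (P i) • m i := by
    rw [Measure.comp_congr (η := Kernel.const X (m i))
      (ae_restrict_of_forall_mem (hP i) fun x hx => by rw [hη i x hx, Kernel.const_apply])]
    simp
  have hsum : μ = Measure.sum fun i => μ.restrict (P i) := by
    rw [← Measure.restrict_iUnion hdisj hP, Measure.restrict_eq_self_of_ae_mem hμ]
  conv_lhs =>
    rw [hsum, Measure.bind_sum _ _ η.measurable.aemeasurable, Measure.sum_fintype]
  simp only [hcell]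

variable {D : ι → Set X}

open Classical in
/-- The kernel replacing a point of the cell `D i` by a `ν`-random point of this cell; points
outside all the cells do not move. -/
def cellKernel (ν : Measure X) (hD : ∀ i, MeasurableSet (D i)) : Kernel X X :=
  ∑ i, Kernel.piecewise (hD i) (Kernel.const X ν[|D i]) 0 +
    Kernel.piecewise (MeasurableSet.iUnion hD) 0 Kernel.id

variable {ν : Measure X} {hD : ∀ i, MeasurableSet (D i)}

lemma cellKernel_apply_of_mem (hdisj : Pairwise (Function.onFun Disjoint D)) {i : ι} {x : X}
    (hx : x ∈ D i) : cellKernel ν hD x = ν[|D i] := by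
  classical
  have hne : ∀ j, j ≠ i → x ∉ D j := fun j hj hxj => (hdisj hj).le_bot ⟨hxj, hx⟩
  rw [cellKernel, add_apply, sum_apply, Kernel.piecewise_apply,
    if_pos (mem_iUnion.2 ⟨i, hx⟩), zero_apply, add_zero,
    Finset.sum_eq_single_of_mem i (Finset.mem_univ i)]
  · simp [Kernel.piecewise_apply, hx]
  · intro j _ hj
    simp [Kernel.piecewise_apply, hne j hj]

lemma cellKernel_apply_of_notMem {x : X} (hx : x ∉ ⋃ i, D i) :
    cellKernel ν hD x = Measure.dirac x := by
  classical
  have hnot : ∀ i, x ∉ D i := fun i hi => hx (mem_iUnion.2 ⟨i, hi⟩)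
  simp [cellKernel, Kernel.piecewise_apply, hnot, Kernel.id_apply]

lemma isMarkovKernel_cellKernel [IsFiniteMeasure ν]
    (hdisj : Pairwise (Function.onFun Disjoint D)) (hν : ∀ i, ν (D i) ≠ 0) :
    IsMarkovKernel (cellKernel ν hD) := by
  refine ⟨fun x => ?_⟩
  by_cases hx : x ∈ ⋃ i, D i
  · obtain ⟨i, hi⟩ := mem_iUnion.1 hx
    rw [cellKernel_apply_of_mem hdisj hi]
    exact cond_isProbabilityMeasure (hν i)
  · rw [cellKernel_apply_of_notMem hx]
    infer_instance

lemma cellKernel_comp_self [IsFiniteMeasure ν] (hdisj : Pairwise (Function.onFun Disjoint D))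
    (hν : ∀ i, ν (D i) ≠ 0) : cellKernel ν hD ∘ₘ ν = ν := by
  have hU : MeasurableSet (⋃ i, D i) := .iUnion hD
  have hinside : cellKernel ν hD ∘ₘ (ν.restrict (⋃ i, D i)) = ν.restrict (⋃ i, D i) := by
    rw [comp_eq_sum_of_forall_mem hD hdisj (fun i x => cellKernel_apply_of_mem hdisj)
      (ae_restrict_mem hU)]
    conv_rhs => rw [Measure.restrict_iUnion hdisj hD, Measure.sum_fintype]
    refine Finset.sum_congr rfl fun i _ => ?_
    rw [Measure.restrict_apply (hD i), inter_eq_left.2 (subset_iUnion D i), ProbabilityTheory.cond,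
      smul_smul, ENNReal.mul_inv_cancel (hν i) (measure_ne_top ν _), one_smul]
  have houtside : cellKernel ν hD ∘ₘ (ν.restrict (⋃ i, D i)ᶜ) = ν.restrict (⋃ i, D i)ᶜ := by
    rw [Measure.comp_congr (η := Kernel.id)
      (ae_restrict_of_forall_mem hU.compl fun x hx => by
        rw [cellKernel_apply_of_notMem hx, Kernel.id_apply])]
    exact Measure.id_comp
  calc cellKernel ν hD ∘ₘ ν
      = cellKernel ν hD ∘ₘ (ν.restrict (⋃ i, D i) + ν.restrict (⋃ i, D i)ᶜ) := by
        rw [Measure.restrict_add_restrict_compl hU]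
    _ = ν.restrict (⋃ i, D i) + ν.restrict (⋃ i, D i)ᶜ := by
        rw [Measure.comp_add, hinside, houtside]
    _ = ν := Measure.restrict_add_restrict_compl hU

lemma cellKernel_comp {μ : Measure X} (hdisj : Pairwise (Function.onFun Disjoint D))
    (hμ : ∀ᵐ x ∂μ, x ∈ ⋃ i, D i) :
    cellKernel ν hD ∘ₘ μ = ∑ i, (μ (D i) * (ν (D i))⁻¹) • ν.restrict (D i) := by
  rw [comp_eq_sum_of_forall_mem hD hdisj (fun i x => cellKernel_apply_of_mem hdisj) hμ]
  simp only [ProbabilityTheory.cond, smul_smul]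

lemma cellKernel_parallelComp_comp [IsFiniteMeasure ν] {Q : Measure (X × X)}
    (hdisj : Pairwise (Function.onFun Disjoint D)) (hν : ∀ i, ν (D i) ≠ 0)
    (hfst : ∀ᵐ x ∂Q.fst, x ∈ ⋃ i, D i) (hsnd : ∀ᵐ x ∂Q.snd, x ∈ ⋃ i, D i) :
    (cellKernel ν hD ∥ₖ cellKernel ν hD) ∘ₘ Q = ∑ i, ∑ j,
      (Q (D i ×ˢ D j) * ((ν (D i))⁻¹ * (ν (D j))⁻¹)) • (ν.prod ν).restrict (D i ×ˢ D j) := by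
  have := isMarkovKernel_cellKernel (hD := hD) hdisj hν
  have hP_disj : Pairwise (Function.onFun Disjoint fun p : ι × ι => D p.1 ×ˢ D p.2) := by
    rintro ⟨i, j⟩ ⟨i', j'⟩ h
    rw [Function.onFun, Set.disjoint_prod]
    by_cases hi : i = i'
    · exact .inr (hdisj fun hj => h (Prod.ext hi hj))
    · exact .inl (hdisj hi)
  have hcell : ∀ p : ι × ι, ∀ z ∈ D p.1 ×ˢ D p.2, (cellKernel ν hD ∥ₖ cellKernel ν hD) z =
      ((ν (D p.1))⁻¹ * (ν (D p.2))⁻¹) • (ν.prod ν).restrict (D p.1 ×ˢ D p.2) := by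
    rintro p z ⟨hz_fst, hz_snd⟩
    rw [Kernel.parallelComp_apply, cellKernel_apply_of_mem hdisj hz_fst,
      cellKernel_apply_of_mem hdisj hz_snd, ProbabilityTheory.cond, ProbabilityTheory.cond,
      Measure.prod_smul_left, Measure.prod_smul_right, Measure.prod_restrict, smul_smul]
  have hQ : ∀ᵐ z ∂Q, z ∈ ⋃ p : ι × ι, D p.1 ×ˢ D p.2 := by
    filter_upwards [ae_of_ae_map measurable_fst.aemeasurable hfst,
      ae_of_ae_map measurable_snd.aemeasurable hsnd] with z hz_fst hz_snd
    obtain ⟨⟨i, hi⟩, ⟨j, hj⟩⟩ := And.intro (mem_iUnion.1 hz_fst) (mem_iUnion.1 hz_snd)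
    exact mem_iUnion.2 ⟨(i, j), hi, hj⟩
  rw [comp_eq_sum_of_forall_mem (P := fun p : ι × ι => D p.1 ×ˢ D p.2)
    (m := fun p => ((ν (D p.1))⁻¹ * (ν (D p.2))⁻¹) • (ν.prod ν).restrict (D p.1 ×ˢ D p.2))
    (fun p => (hD p.1).prod (hD p.2)) hP_disj hcell hQ, Fintype.sum_prod_type]
  simp only [smul_smul]

end CellKernel

section CellPartition

variable {X : Type*} [PseudoMetricSpace X] [MeasurableSpace X] {ι : Type*}

/-- The disjoint open cells `D i` partition `K` up to a `ρ`-null set. They stay inside `U`, all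
meet `K`, have points closer than `ε` to each other and `ρ`-null boundaries. -/
structure IsCellPartition (ρ : Measure X) (K U : Set X) (ε : ℝ) (D : ι → Set X) : Prop where
  isOpen : ∀ i, IsOpen (D i)
  pairwise_disjoint : Pairwise (Function.onFun Disjoint D)
  inter_nonempty : ∀ i, (D i ∩ K).Nonempty
  iUnion_subset : ⋃ i, D i ⊆ U
  dist_lt : ∀ i, ∀ x ∈ D i, ∀ y ∈ D i, dist x y < ε
  measure_sdiff : ρ (K \ ⋃ i, D i) = 0
  measure_frontier : ∀ i, ρ (frontier (D i)) = 0

variable {ρ : Measure X} {K U : Set X} {ε : ℝ}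

lemma exists_ball_subset_null_frontier [OpensMeasurableSpace X] [SFinite ρ] (hU : IsOpen U)
    (hε : 0 < ε) {x : X} (hx : x ∈ U) :
    ∃ r ∈ Ioo 0 ε, Metric.ball x r ⊆ U ∧ ρ (frontier (Metric.ball x r)) = 0 := by
  obtain ⟨δ, hδ, hball⟩ := Metric.isOpen_iff.1 hU x hx
  obtain ⟨r, ⟨hr_pos, hr_lt⟩, hr⟩ := exists_null_frontier_thickening ρ {x} (lt_min hδ hε)
  rw [Metric.thickening_singleton] at hr
  exact ⟨r, ⟨hr_pos, hr_lt.trans_le (min_le_right _ _)⟩,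
    (Metric.ball_subset_ball (hr_lt.le.trans (min_le_left _ _))).trans hball, hr⟩

lemma exists_finite_cover_null_frontier [OpensMeasurableSpace X] [SFinite ρ] (hK : IsCompact K)
    (hU : IsOpen U) (hKU : K ⊆ U) (hε : 0 < ε) :
    ∃ (n : ℕ) (B : Fin n → Set X), K ⊆ ⋃ i, B i ∧ ∀ i, B i ⊆ U ∧
      (∀ x ∈ B i, ∀ y ∈ B i, dist x y < ε) ∧ ρ (frontier (B i)) = 0 := by
  choose! r hr hrU hr_null using fun x (hx : x ∈ K) =>
    exists_ball_subset_null_frontier (ρ := ρ) hU (half_pos hε) (hKU hx)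
  obtain ⟨t, htK, ht⟩ := hK.elim_nhds_subcover (fun x => Metric.ball x (r x))
    fun x hx => Metric.ball_mem_nhds x (hr x hx).1
  have hmem (i : Fin t.card) : (t.equivFin.symm i : X) ∈ K := htK _ (t.equivFin.symm i).2
  refine ⟨t.card, fun i => Metric.ball (t.equivFin.symm i : X) (r (t.equivFin.symm i)), ?_,
    fun i => ⟨hrU _ (hmem i), fun x hx y hy => ?_, hr_null _ (hmem i)⟩⟩
  · rw [t.equivFin.symm.surjective.iUnion_comp fun x : t => Metric.ball (x : X) (r x)]
    exact ht.trans (biUnion_eq_iUnion _ _).subset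
  · have := (hr _ (hmem i)).2
    linarith [dist_triangle_right x y (t.equivFin.symm i : X), Metric.mem_ball.1 hx,
      Metric.mem_ball.1 hy]

lemma measure_frontier_sdiff_eq_zero {s t : Set X} (hs : ρ (frontier s) = 0)
    (ht : ρ (frontier t) = 0) : ρ (frontier (s \ t)) = 0 := by
  refine measure_mono_null ((frontier_inter_subset s tᶜ).trans ?_) (measure_union_null hs ht)
  rw [frontier_compl]
  exact union_subset_union inter_subset_left inter_subset_right

lemma measure_frontier_disjointed_eq_zero {n : ℕ} {B : Fin n → Set X}
    (hB : ∀ i, ρ (frontier (B i)) = 0) (i : Fin n) : ρ (frontier (disjointed B i)) = 0 :=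
  disjointedRec (p := fun s => ρ (frontier s) = 0)
    (fun _ j hs => measure_frontier_sdiff_eq_zero hs (hB j)) (hB i)

lemma isCellPartition_interior_disjointed {n : ℕ} {B : Fin n → Set X} (hKB : K ⊆ ⋃ i, B i)
    (hBU : ∀ i, B i ⊆ U) (hdist : ∀ i, ∀ x ∈ B i, ∀ y ∈ B i, dist x y < ε)
    (hfr : ∀ i, ρ (frontier (B i)) = 0) :
    IsCellPartition ρ K U ε
      fun i : {i // (interior (disjointed B i) ∩ K).Nonempty} => interior (disjointed B i) where
  isOpen i := isOpen_interior
  pairwise_disjoint i j hij := (disjoint_disjointed B (Subtype.coe_ne_coe.2 hij)).mono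
    interior_subset interior_subset
  inter_nonempty i := i.2
  iUnion_subset := iUnion_subset fun i =>
    interior_subset.trans ((disjointed_subset B i).trans (hBU i))
  dist_lt i x hx y hy := hdist i x (disjointed_subset B i (interior_subset hx)) y
    (disjointed_subset B i (interior_subset hy))
  measure_sdiff := by
    refine measure_mono_null ?_ (measure_iUnion_null (measure_frontier_disjointed_eq_zero hfr))
    rintro x ⟨hxK, hx⟩
    obtain ⟨i, hi⟩ := mem_iUnion.1 ((iUnion_disjointed (f := B)).symm.subset (hKB hxK))
    refine mem_iUnion.2 ⟨i, subset_closure hi, fun hxi => hx ?_⟩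
    exact mem_iUnion.2 ⟨⟨i, x, hxi, hxK⟩, hxi⟩
  measure_frontier i := measure_mono_null frontier_interior_subset
    (measure_frontier_disjointed_eq_zero hfr i)

lemma IsCellPartition.comp_equiv {ι' : Type*} {D : ι → Set X} (hD : IsCellPartition ρ K U ε D)
    (e : ι' ≃ ι) : IsCellPartition ρ K U ε (D ∘ e) where
  isOpen i := hD.isOpen (e i)
  pairwise_disjoint := hD.pairwise_disjoint.comp_of_injective e.injective
  inter_nonempty i := hD.inter_nonempty (e i)
  iUnion_subset := (e.surjective.iUnion_comp D).trans_subset hD.iUnion_subset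
  dist_lt i := hD.dist_lt (e i)
  measure_sdiff := (e.surjective.iUnion_comp D).symm ▸ hD.measure_sdiff
  measure_frontier i := hD.measure_frontier (e i)

lemma exists_isCellPartition [OpensMeasurableSpace X] [SFinite ρ] (hK : IsCompact K)
    (hU : IsOpen U) (hKU : K ⊆ U) (hε : 0 < ε) :
    ∃ (n : ℕ) (D : Fin n → Set X), IsCellPartition ρ K U ε D := by
  classical
  obtain ⟨n, B, hKB, hB⟩ := exists_finite_cover_null_frontier (ρ := ρ) hK hU hKU hε
  exact ⟨_, _, (isCellPartition_interior_disjointed hKB (fun i => (hB i).1)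
    (fun i => (hB i).2.1) fun i => (hB i).2.2).comp_equiv (Fintype.equivFin _).symm⟩

lemma IsCellPartition.ae_mem_iUnion {m : Measure X} {D : ι → Set X}
    (hD : IsCellPartition ρ K U ε D) (hm : m ≪ ρ) (hmK : ∀ᵐ x ∂m, x ∈ K) :
    ∀ᵐ x ∂m, x ∈ ⋃ i, D i := by
  filter_upwards [hmK, measure_eq_zero_iff_ae_notMem.1 (hm hD.measure_sdiff)] with x hxK hx
  exact by_contra fun hxD => hx ⟨hxK, hxD⟩

lemma IsCellPartition.ae_mem_closure_cellKernel_comp [OpensMeasurableSpace X] [Fintype ι]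
    {μ ν : Measure X} {D : ι → Set X} (hD : IsCellPartition ρ K U ε D) (hμ : μ ≪ ρ)
    (hμK : ∀ᵐ x ∂μ, x ∈ K) {hDm : ∀ i, MeasurableSet (D i)} :
    ∀ᵐ x ∂(cellKernel ν hDm ∘ₘ μ), x ∈ closure U := by
  refine Measure.ae_comp_of_ae_ae isClosed_closure.measurableSet ?_
  filter_upwards [hD.ae_mem_iUnion hμ hμK] with x hx
  obtain ⟨i, hi⟩ := mem_iUnion.1 hx
  rw [cellKernel_apply_of_mem hD.pairwise_disjoint hi]
  filter_upwards [ae_cond_mem (hDm i)] with y hy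
  exact subset_closure (hD.iUnion_subset (mem_iUnion.2 ⟨i, hy⟩))

lemma ae_cellKernel_dist_lt [OpensMeasurableSpace X] [Fintype ι] {D : ι → Set X}
    {ν : Measure X} {hD : ∀ i, MeasurableSet (D i)}
    (hdisj : Pairwise (Function.onFun Disjoint D)) (hε : 0 < ε)
    (hdist : ∀ i, ∀ x ∈ D i, ∀ y ∈ D i, dist x y < ε) (x : X) :
    ∀ᵐ y ∂cellKernel ν hD x, dist y x < ε := by
  by_cases hx : x ∈ ⋃ i, D i
  · obtain ⟨i, hi⟩ := mem_iUnion.1 hx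
    rw [cellKernel_apply_of_mem hdisj hi]
    exact (ae_cond_mem (hD i)).mono fun y hy => hdist i y hy x hi
  · rw [cellKernel_apply_of_notMem hx]
    exact (ae_dirac_iff Metric.isOpen_ball.measurableSet).2 (Metric.mem_ball_self hε)

lemma concentratesAtId_of_ae_dist_lt {κ : ℕ → Kernel X X} {ε : ℕ → ℝ}
    (hε : Tendsto ε atTop (𝓝 0)) (hκ : ∀ n x, ∀ᵐ y ∂κ n x, dist y x < ε n) :
    ConcentratesAtId κ := by
  intro x U hU
  obtain ⟨δ, hδ, hball⟩ := Metric.mem_nhds_iff.1 hU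
  filter_upwards [hε.eventually_lt_const hδ] with n hn
  exact (hκ n x).mono fun y hy => hball (hy.trans hn)

end CellPartition

section Support

variable {X : Type*} [TopologicalSpace X] [MeasurableSpace X]

lemma msupp_eq_support (μ : Measure X) : msupp μ = μ.support := by
  ext x
  rw [Measure.support_eq_forall_isOpen]
  exact forall_congr' fun U => forall_comm

lemma isClosed_msupp (m : Measure X) : IsClosed (msupp m) :=
  msupp_eq_support m ▸ Measure.isClosed_support

lemma ae_mem_msupp [HereditarilyLindelofSpace X] (m : Measure X) : ∀ᵐ x ∂m, x ∈ msupp m :=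
  msupp_eq_support m ▸ Measure.support_mem_ae

lemma measure_ne_zero_of_inter_msupp_nonempty {m : Measure X} {V : Set X} (hV : IsOpen V)
    (h : (V ∩ msupp m).Nonempty) : m V ≠ 0 :=
  have ⟨_, hxV, hx⟩ := h
  (hx V hV hxV).ne'

lemma ae_fst_and_snd_mem_of_msupp_eq_prod [OpensMeasurableSpace X]
    [SecondCountableTopology X] {Q : Measure (X × X)} {K : Set X} (hK : IsClosed K)
    (hQ : msupp Q = K ×ˢ K) : (∀ᵐ x ∂Q.fst, x ∈ K) ∧ ∀ᵐ x ∂Q.snd, x ∈ K := by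
  have hQK : ∀ᵐ z ∂Q, z ∈ K ×ˢ K := hQ ▸ ae_mem_msupp Q
  exact ⟨(ae_map_iff measurable_fst.aemeasurable hK.measurableSet).2 (hQK.mono fun _ h => h.1),
    (ae_map_iff measurable_snd.aemeasurable hK.measurableSet).2 (hQK.mono fun _ h => h.2)⟩

lemma support_restrict_of_isOpen [OpensMeasurableSpace X] {ν : Measure X} [ν.IsOpenPosMeasure]
    {U : Set X} (hU : IsOpen U) : (ν.restrict U).support = closure U := by
  refine (Measure.support_restrict_subset.trans inter_subset_left).antisymm ?_
  refine closure_minimal ?_ Measure.isClosed_support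
  simpa [hU.interior_eq, Measure.support_eq_univ] using
    Measure.interior_inter_support (μ := ν) (s := U)

end Support

section StepMeasure

variable {X : Type*} [MeasurableSpace X] {ι : Type*} [Fintype ι]

lemma withDensity_sum_indicator_const (ν : Measure X) {P : ι → Set X}
    (hP : ∀ i, MeasurableSet (P i)) (c : ι → ℝ≥0∞) :
    ν.withDensity (fun x => ∑ i, indicator (P i) (fun _ => c i) x) =
      ∑ i, c i • ν.restrict (P i) := by
  ext s hs
  rw [withDensity_apply _ hs,
    lintegral_finsetSum _ fun i _ => measurable_const.indicator (hP i)]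
  simp [lintegral_indicator_const (hP _), Measure.restrict_apply (hP _),
    Measure.restrict_apply hs, inter_comm]

lemma sum_smul_restrict_apply_eq_zero_iff {ν : Measure X} {P : ι → Set X} {c : ι → ℝ≥0∞}
    (hc : ∀ i, c i ≠ 0) {s : Set X} (hs : MeasurableSet s) :
    (∑ i, c i • ν.restrict (P i)) s = 0 ↔ ν.restrict (⋃ i, P i) s = 0 := by
  simp [Measure.restrict_apply hs, inter_iUnion, hc]

lemma msupp_sum_smul_restrict [TopologicalSpace X] [OpensMeasurableSpace X] {ν : Measure X}
    [ν.IsOpenPosMeasure] {P : ι → Set X} (hP : ∀ i, IsOpen (P i)) {c : ι → ℝ≥0∞}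
    (hc : ∀ i, c i ≠ 0) :
    msupp (∑ i, c i • ν.restrict (P i)) = closure (⋃ i, P i) := by
  rw [msupp_eq_support, ← support_restrict_of_isOpen (ν := ν) (isOpen_iUnion hP)]
  refine Subset.antisymm (Measure.AbsolutelyContinuous.support_mono ?_)
    (Measure.AbsolutelyContinuous.support_mono ?_)
  · exact .mk fun s hs => (sum_smul_restrict_apply_eq_zero_iff hc hs).2
  · exact .mk fun s hs => (sum_smul_restrict_apply_eq_zero_iff hc hs).1

end StepMeasure

section MemM1

variable {X : Type*} [TopologicalSpace X] [MeasurableSpace X] (S : ChainSetting X)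

instance isProbabilityMeasure_lam : IsProbabilityMeasure S.lam := S.lam_prob

instance isOpenPosMeasure_lam : S.lam.IsOpenPosMeasure :=
  ⟨fun U hU hne => (S.lam_pos U hU hne).ne'⟩

lemma memM1_sum_smul_restrict [OpensMeasurableSpace X] [SecondCountableTopology X] {ℓ : ℕ}
    {D : Fin ℓ → Set X} (hD : ∀ i, IsOpen (D i)) (hdisj : Pairwise (Function.onFun Disjoint D))
    (hfr : ∀ i, S.lam (frontier (D i)) = 0)
    (hE0 : closure (⋃ i, D i) ⊆ S.E0ᶜ) {a : Fin ℓ → ℝ≥0∞} (ha : ∀ i, a i ≠ 0)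
    (ha_top : ∀ i, a i ≠ ∞) {b : Fin ℓ → Fin ℓ → ℝ≥0∞} (hb : ∀ i j, b i j ≠ 0)
    (hb_top : ∀ i j, b i j ≠ ∞) :
    S.MemM1 (∑ i, a i • S.lam.restrict (D i))
      (∑ i, ∑ j, b i j • (S.lam.prod S.lam).restrict (D i ×ˢ D j)) := by
  have hμ_supp := msupp_sum_smul_restrict (ν := S.lam) hD ha
  have hQ_supp := msupp_sum_smul_restrict (ν := S.lam.prod S.lam)
    (P := fun p : Fin ℓ × Fin ℓ => D p.1 ×ˢ D p.2) (fun p => (hD p.1).prod (hD p.2))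
    (c := fun p => b p.1 p.2) fun p => hb p.1 p.2
  have hQ_density := withDensity_sum_indicator_const (S.lam.prod S.lam)
    (P := fun p : Fin ℓ × Fin ℓ => D p.1 ×ˢ D p.2)
    (fun p => ((hD p.1).prod (hD p.2)).measurableSet) fun p => b p.1 p.2
  simp only [Fintype.sum_prod_type] at hQ_supp hQ_density
  refine ⟨hμ_supp ▸ hE0, ?_, ℓ, D, hD, fun i => ?_, hdisj, ?_,
    ⟨fun i => (a i).toReal, fun i => toReal_pos (ha i) (ha_top i), ?_⟩,
    ⟨fun i j => (b i j).toReal, fun i j => toReal_pos (hb i j) (hb_top i j), ?_⟩⟩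
  · rw [hQ_supp, hμ_supp, iUnion_prod, closure_prod_eq]
  · rw [hμ_supp]
    exact (subset_iUnion D i).trans subset_closure
  · rw [hμ_supp, closure_iUnion_of_finite]
    refine measure_mono_null ?_ (measure_iUnion_null hfr)
    rintro x ⟨hx, hnot⟩
    obtain ⟨i, hi⟩ := mem_iUnion.1 hx
    exact mem_iUnion.2 ⟨i, (hD i).frontier_eq ▸ ⟨hi, fun hx => hnot (mem_iUnion.2 ⟨i, hx⟩)⟩⟩
  · simp only [ofReal_toReal (ha_top _)]
    exact (withDensity_sum_indicator_const _ (fun i => (hD i).measurableSet) a).symm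
  · simp only [ofReal_toReal (hb_top _ _)]
    exact hQ_density.symm

end MemM1

section CellPartitionMemM1

variable {X : Type*} [MeasurableSpace X]

lemma IsCellPartition.memM1_cellKernel [PseudoMetricSpace X] [OpensMeasurableSpace X]
    [SecondCountableTopology X] {S : ChainSetting X} {μ ρ : Measure X} [IsFiniteMeasure μ]
    {Q : Measure (X × X)} [IsFiniteMeasure Q] {U : Set X} {ε : ℝ} {n : ℕ} {D : Fin n → Set X}
    (hD : IsCellPartition ρ (msupp μ) U ε D) (hlam : S.lam ≪ ρ) (hμ : μ ≪ ρ)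
    (hfst : Q.fst ≪ ρ) (hsnd : Q.snd ≪ ρ) (hU : closure U ⊆ S.E0ᶜ)
    (hsupp : msupp Q = msupp μ ×ˢ msupp μ) {hDm : ∀ i, MeasurableSet (D i)} :
    S.MemM1 (cellKernel S.lam hDm ∘ₘ μ)
      ((cellKernel S.lam hDm ∥ₖ cellKernel S.lam hDm) ∘ₘ Q) := by
  have hlam_ne (i : Fin n) : S.lam (D i) ≠ 0 :=
    ((hD.isOpen i).measure_pos S.lam (hD.inter_nonempty i).left).ne'
  have hμ_ne (i : Fin n) : μ (D i) ≠ 0 :=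
    measure_ne_zero_of_inter_msupp_nonempty (hD.isOpen i) (hD.inter_nonempty i)
  have hQ_ne (i j : Fin n) : Q (D i ×ˢ D j) ≠ 0 := by
    refine measure_ne_zero_of_inter_msupp_nonempty ((hD.isOpen i).prod (hD.isOpen j)) ?_
    rw [hsupp, prod_inter_prod]
    exact (hD.inter_nonempty i).prod (hD.inter_nonempty j)
  obtain ⟨hfst_mem, hsnd_mem⟩ := ae_fst_and_snd_mem_of_msupp_eq_prod (isClosed_msupp μ) hsupp
  rw [cellKernel_comp hD.pairwise_disjoint (hD.ae_mem_iUnion hμ (ae_mem_msupp μ)),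
    cellKernel_parallelComp_comp hD.pairwise_disjoint hlam_ne
      (hD.ae_mem_iUnion hfst hfst_mem) (hD.ae_mem_iUnion hsnd hsnd_mem)]
  have hinv_ne (i : Fin n) : (S.lam (D i))⁻¹ ≠ 0 := ENNReal.inv_ne_zero.2 (measure_ne_top _ _)
  have hinv_top (i : Fin n) : (S.lam (D i))⁻¹ ≠ ∞ := ENNReal.inv_ne_top.2 (hlam_ne i)
  exact memM1_sum_smul_restrict S hD.isOpen hD.pairwise_disjoint
    (fun i => hlam (hD.measure_frontier i)) ((closure_mono hD.iUnion_subset).trans hU)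
    (fun i => mul_ne_zero (hμ_ne i) (hinv_ne i))
    (fun i => mul_ne_top (measure_ne_top _ _) (hinv_top i))
    (fun i j => mul_ne_zero (hQ_ne i j) (mul_ne_zero (hinv_ne i) (hinv_ne j)))
    (fun i j => mul_ne_top (measure_ne_top _ _) (mul_ne_top (hinv_top i) (hinv_top j)))

lemma exists_concentratesAtId_memM1 [TopologicalSpace X] [OpensMeasurableSpace X]
    [CompactSpace X] [TopologicalSpace.PseudoMetrizableSpace X] [SecondCountableTopology X]
    {S : ChainSetting X} {μ : Measure X} [IsFiniteMeasure μ] {Q : Measure (X × X)}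
    [IsFiniteMeasure Q] {U : Set X} (hU : IsOpen U) (hμU : msupp μ ⊆ U)
    (hUE0 : closure U ⊆ S.E0ᶜ) (hsupp : msupp Q = msupp μ ×ˢ msupp μ) :
    ∃ κ : ℕ → Kernel X X, (∀ n, IsMarkovKernel (κ n)) ∧ ConcentratesAtId κ ∧
      (∀ n, κ n ∘ₘ S.lam = S.lam) ∧ (∀ n, ∀ᵐ x ∂(κ n ∘ₘ μ), x ∈ closure U) ∧
      ∀ n, S.MemM1 (κ n ∘ₘ μ) ((κ n ∥ₖ κ n) ∘ₘ Q) := by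
  let := TopologicalSpace.pseudoMetrizableSpacePseudoMetric X
  obtain ⟨ε, -, hε_pos, hε⟩ := exists_seq_strictAnti_tendsto (0 : ℝ)
  let ρ := S.lam + μ + Q.fst + Q.snd
  choose N D hD using fun n => exists_isCellPartition (ρ := ρ) (isClosed_msupp μ).isCompact hU
    hμU (hε_pos n)
  have hDm (n : ℕ) (i : Fin (N n)) : MeasurableSet (D n i) := ((hD n).isOpen i).measurableSet
  have hlam_ne (n : ℕ) (i : Fin (N n)) : S.lam (D n i) ≠ 0 :=
    (((hD n).isOpen i).measure_pos S.lam ((hD n).inter_nonempty i).left).ne'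
  have hlam : S.lam ≪ ρ :=
    ((Measure.AbsolutelyContinuous.rfl.add_right _).add_right _).add_right _
  have hμ : μ ≪ ρ := ((Measure.AbsolutelyContinuous.rfl.add_right' _).add_right _).add_right _
  have hfst : Q.fst ≪ ρ := (Measure.AbsolutelyContinuous.rfl.add_right' _).add_right _
  have hsnd : Q.snd ≪ ρ := Measure.AbsolutelyContinuous.rfl.add_right' _
  refine ⟨fun n => cellKernel S.lam (hDm n),
    fun n => isMarkovKernel_cellKernel (hD n).pairwise_disjoint (hlam_ne n),
    concentratesAtId_of_ae_dist_lt hε fun n x =>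
      ae_cellKernel_dist_lt (hD n).pairwise_disjoint (hε_pos n) (hD n).dist_lt x,
    fun n => cellKernel_comp_self (hD n).pairwise_disjoint (hlam_ne n), fun n => ?_,
    fun n => (hD n).memM1_cellKernel hlam hμ hfst hsnd hUE0 hsupp⟩
  exact (hD n).ae_mem_closure_cellKernel_comp hμ (ae_mem_msupp μ)

end CellPartitionMemM1

section Rate

open InformationTheory
open scoped BoundedContinuousFunction

variable {X : Type*} [TopologicalSpace X] [MeasurableSpace X] (S : ChainSetting X)

lemma rateI0_eq_klDiv {μ : Measure X} {Q : Measure (X × X)} [IsFiniteMeasure Q]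
    [IsFiniteMeasure (S.muc μ)] (hQ : Q.fst = Q.snd) :
    S.rateI0 μ Q = klDiv Q (S.muc μ) := by
  classical
  rw [ChainSetting.rateI0, klDiv_eq_lintegral_klFun]
  simp only [hQ, true_and]
  congr 1
  refine lintegral_congr_ae ?_
  filter_upwards [Q.rnDeriv_ne_top (S.muc μ)] with z hz
  rw [PsiE, if_neg hz, klFun]
  ring_nf

lemma exists_muc_eq_expTilt [CompactSpace X] {F : Set X}
    (hF : IsCompact F) (hFE0 : F ⊆ S.E0ᶜ) :
    ∃ g : X × X →ᵇ ℝ, ∀ μ : Measure X, SFinite μ → (∀ᵐ x ∂μ, x ∈ F) →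
      S.muc μ = expTilt (μ.prod S.lam) g := by
  have hr_pos : ∀ x ∈ F, 0 < S.r x := fun x hx => (S.r_nonneg x).lt_of_ne' (hFE0 hx)
  obtain ⟨δ, hδ, hδ_le⟩ := hF.exists_forall_le' S.r_cont.continuousOn hr_pos
  have hpos : ∀ z : X × X, 0 < max (S.r z.1) δ * S.p z.1 z.2 := fun z =>
    mul_pos (hδ.trans_le (le_max_right _ _)) (S.p_pos _ _)
  have hcont : Continuous fun z : X × X => Real.log (max (S.r z.1) δ * S.p z.1 z.2) :=
    (((S.r_cont.comp continuous_fst).max continuous_const).mul S.p_cont).log fun z => (hpos z).ne'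
  refine ⟨.mkOfCompact ⟨_, hcont⟩, fun μ _ hμ => withDensity_congr_ae ?_⟩
  filter_upwards [Measure.quasiMeasurePreserving_fst.ae hμ] with z hz
  rw [BoundedContinuousFunction.mkOfCompact_apply, ContinuousMap.coe_mk, Real.exp_log (hpos z),
    max_eq_left (hδ_le _ hz)]

variable [BorelSpace X] [TopologicalSpace.PseudoMetrizableSpace X]

lemma ConcentratesAtId.eventually_comp_ne {κ : ℕ → Kernel X X} [∀ n, IsMarkovKernel (κ n)]
    (hκ : ConcentratesAtId κ) {μ ν : Measure X} [IsFiniteMeasure μ] [IsFiniteMeasure ν]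
    (h : μ ≠ ν) : ∀ᶠ n in atTop, κ n ∘ₘ μ ≠ κ n ∘ₘ ν := by
  obtain ⟨f, hf⟩ : ∃ f : X →ᵇ ℝ, ∫ x, f x ∂μ ≠ ∫ x, f x ∂ν := by
    by_contra! hall
    exact h (ext_of_forall_integral_eq_of_IsFiniteMeasure hall)
  have hdiff := (hκ.tendsto_integral_comp μ f).sub (hκ.tendsto_integral_comp ν f)
  filter_upwards [hdiff.eventually_ne (sub_ne_zero.2 hf)] with n hn heq
  exact hn (by rw [heq, sub_self])

lemma ConcentratesAtId.tendsto_rateI0 [CompactSpace X] [SecondCountableTopology X]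
    {κ : ℕ → Kernel X X} [∀ n, IsMarkovKernel (κ n)] (hκ : ConcentratesAtId κ)
    (hlam : ∀ n, κ n ∘ₘ S.lam = S.lam)
    {F : Set X} (hF : IsCompact F) (hFE0 : F ⊆ S.E0ᶜ) {μ : Measure X} [IsFiniteMeasure μ]
    (hμ : ∀ᵐ x ∂μ, x ∈ F) (hκμ : ∀ n, ∀ᵐ x ∂(κ n ∘ₘ μ), x ∈ F) (Q : Measure (X × X))
    [IsFiniteMeasure Q] :
    Tendsto (fun n => S.rateI0 (κ n ∘ₘ μ) ((κ n ∥ₖ κ n) ∘ₘ Q)) atTop (𝓝 (S.rateI0 μ Q)) := by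
  by_cases hQ : Q.fst = Q.snd
  · obtain ⟨g, hg⟩ := exists_muc_eq_expTilt S hF hFE0
    have hmuc : S.muc μ = expTilt (μ.prod S.lam) g := hg μ inferInstance hμ
    have hmuc_comp (n : ℕ) :
        S.muc (κ n ∘ₘ μ) = expTilt ((κ n ∥ₖ κ n) ∘ₘ (μ.prod S.lam)) g := by
      rw [hg _ inferInstance (hκμ n), parallelComp_comp_measure_prod, hlam]
    have hfinite : IsFiniteMeasure (S.muc μ) := hmuc ▸ inferInstance
    have hfinite_comp (n : ℕ) : IsFiniteMeasure (S.muc (κ n ∘ₘ μ)) :=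
      hmuc_comp n ▸ inferInstance
    have hQ_comp (n : ℕ) : ((κ n ∥ₖ κ n) ∘ₘ Q).fst = ((κ n ∥ₖ κ n) ∘ₘ Q).snd := by
      rw [fst_parallelComp_comp, snd_parallelComp_comp, hQ]
    simp only [rateI0_eq_klDiv S hQ, rateI0_eq_klDiv S (hQ_comp _), hmuc, hmuc_comp]
    exact hκ.parallelComp.tendsto_klDiv_comp_expTilt Q (μ.prod S.lam) g
  · refine tendsto_const_nhds.congr' ?_
    filter_upwards [hκ.eventually_comp_ne hQ] with n hn
    rw [← fst_parallelComp_comp (κ n) (κ n), ← snd_parallelComp_comp (κ n) (κ n)] at hn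
    simp [ChainSetting.rateI0, hQ, hn]

end Rate

theorem M1_Idense_in_M2_general (S : ChainSetting E)
    (μ : Measure E) (hμ : IsProbabilityMeasure μ)
    (Q : Measure (E × E)) (hQ : IsFiniteMeasure Q)
    (hE0 : msupp μ ⊆ S.E0ᶜ) (hsupp : msupp Q = msupp μ ×ˢ msupp μ) :
    ∃ (μs : ℕ → Measure E) (Qs : ℕ → Measure (E × E)),
      (∀ n, IsProbabilityMeasure (μs n)) ∧ (∀ n, IsFiniteMeasure (Qs n)) ∧
      (∀ n, S.MemM1 (μs n) (Qs n)) ∧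
      Tendsto (fun n => ((toPM (μs n), toFM (Qs n)) :
          ProbabilityMeasure E × FiniteMeasure (E × E)))
        atTop (𝓝 (toPM μ, toFM Q)) ∧
      Tendsto (fun n => S.rateI0 (μs n) (Qs n)) atTop (𝓝 (S.rateI0 μ Q)) := by
  obtain ⟨U, hU, hμU, hUE0⟩ := normal_exists_closure_subset (isClosed_msupp μ)
    (isClosed_eq S.r_cont continuous_const).isOpen_compl hE0
  obtain ⟨κ, hκ_markov, hκ, hlam, hκμ, hM1⟩ := exists_concentratesAtId_memM1 hU hμU hUE0 hsupp
  have hμ_closure : ∀ᵐ x ∂μ, x ∈ closure U :=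
    (ae_mem_msupp μ).mono fun x hx => subset_closure (hμU hx)
  exact ⟨fun n => κ n ∘ₘ μ, fun n => (κ n ∥ₖ κ n) ∘ₘ Q, inferInstance, inferInstance, hM1,
    (hκ.tendsto_toPM_comp μ).prodMk_nhds (hκ.parallelComp.tendsto_toFM_comp Q),
    hκ.tendsto_rateI0 S hlam isClosed_closure.isCompact hUE0 hμ_closure hκμ Q⟩

/-- **Lemma 5.5**: the set `M₁` is `I`-dense in `M₂`. -/
theorem M1_Idense_in_M2 (S : ChainSetting E)
    (μ : Measure E) (hμ : IsProbabilityMeasure μ)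
    (Q : Measure (E × E)) (hQ : IsFiniteMeasure Q)
    (hmem : S.MemM2 μ Q)
    (hfin : S.rateI0 μ Q ≠ ∞) :
    ∃ (μs : ℕ → Measure E) (Qs : ℕ → Measure (E × E)),
      (∀ n, IsProbabilityMeasure (μs n)) ∧ (∀ n, IsFiniteMeasure (Qs n)) ∧
      (∀ n, S.MemM1 (μs n) (Qs n)) ∧
      Tendsto (fun n => ((toPM (μs n), toFM (Qs n)) :
          ProbabilityMeasure E × FiniteMeasure (E × E)))
        atTop (𝓝 (toPM μ, toFM Q)) ∧
      Tendsto (fun n => S.rateI0 (μs n) (Qs n)) atTop (𝓝 (S.rateI0 μ Q)) := by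
  exact M1_Idense_in_M2_general S μ hμ Q hQ hmem.1 hmem.2.1

end
end
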